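/- Let n ≥ 5 and 1 ≤ q < ∞, and set p = nq. There exists a constant C = C(n,q) such that for all f₁,…,f_n ∈ ℓ^p(ℤ), ‖A_*[f₁,…,f_n]‖_{ℓ^q(ℤ)}^q ≤ C ∏_{i=1}^n ( Σ_{y ∈ ℤ} ( sup_{N ≥ 1} N^{−1} Σ_{x ∈ [−N,N] ∩ ℤ} |f_i(y − x)|² )^{qn/2} )^{1/n}, where the supremum is over integers N ≥ 1. -/

import Mathlib

open scoped BigOperators ENNReal NNReal
open MeasureTheory Finset

noncomputable section

/-- `sphereCount n lam` is the number of lattice points `x ∈ ℤ^n` with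
`x₁² + ⋯ + x_n² = lam`. -/
def sphereCount (n lam : ℕ) : ℕ :=
  {x : Fin n → ℤ | ∑ i, (x i) ^ 2 = (lam : ℤ)}.ncard

/-- The multilinear spherical average
`A_lam[f₁,…,f_n](y) = (1/r_n(lam)) ∑_{|x|² = lam} f₁(y-x₁)⋯f_n(y-x_n)`. -/
def mulAvg (n lam : ℕ) (f : Fin n → ℤ → ℂ) (y : ℤ) : ℂ :=
  (sphereCount n lam : ℂ)⁻¹ *
    ∑ᶠ x ∈ {x : Fin n → ℤ | ∑ i, (x i) ^ 2 = (lam : ℤ)}, ∏ i, f i (y - x i)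

/-- The maximal function `A_*[f₁,…,f_n](y) = sup_{lam ≥ 1} |A_lam[f₁,…,f_n](y)|`. -/
def maxFn (n : ℕ) (f : Fin n → ℤ → ℂ) (y : ℤ) : ℝ≥0∞ :=
  ⨆ (lam : ℕ) (_ : 1 ≤ lam), (‖mulAvg n lam f y‖₊ : ℝ≥0∞)

/-- The `ℓ^p(ℤ)` norm of a complex-valued function, valued in `ℝ≥0∞`. -/
def lpNorm (p : ℝ) (g : ℤ → ℂ) : ℝ≥0∞ :=
  (∑' x : ℤ, (‖g x‖₊ : ℝ≥0∞) ^ p) ^ (1 / p)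

/-- The `ℓ^q(ℤ)` norm of an `ℝ≥0∞`-valued function. -/
def lqNormE (q : ℝ) (g : ℤ → ℝ≥0∞) : ℝ≥0∞ :=
  (∑' x : ℤ, g x ^ q) ^ (1 / q)

/-!
Put `N = ⌊√lam⌋`. The theorem follows by Hölder's inequality from the pointwise bound
`|A_lam[f](y)| ≲ ∏ i, (N⁻¹ ∑_{|x| ≤ N} |f_i(y - x)|²)^{1/2}`, for which one needs a lower bound for
the number of lattice points on a sphere and an upper bound for a multilinear sum over the sphere.

* The lower bound `≳ N ^ (n - 2)` is an induction on `n`, in which the first coordinate is summed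
  over. It starts from `r₄(m) ≥ 8m` for odd `m`, which is Dirichlet's elementary proof of Jacobi's
  theorem: an involution on quadruples evaluates a convolution of two-square counts.
* By orthogonality and Hölder, the multilinear sum is controlled by the `n`-th moment, `n ≥ 5`, of
  the exponential sums `∑ g(x) e(α x²)`, and so by the fifth moment. There an `ε`-loss is removed as
  in Bourgain's work on the squares: duality turns a large level set into a sum of Gaussian
  Weyl sums over its differences. These are theta values, so modularity confines the large ones to
  major arcs, and the pairs on major arcs are counted with moments of a truncated divisor function.
  Low level sets only need the fourth moment, where an `ε`-loss is harmless.
-/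

section Theta

open Complex
open scoped Real UpperHalfPlane

/-- The theta constant `θ₂`. -/
def thetaTwo (τ : ℂ) : ℂ := cexp (π * I * τ / 4) * jacobiTheta₂ (τ / 2) τ

/-- The theta constant `θ₃`. -/
def thetaThree (τ : ℂ) : ℂ := jacobiTheta₂ 0 τ

/-- The theta constant `θ₄`. -/
def thetaFour (τ : ℂ) : ℂ := jacobiTheta₂ (1 / 2) τ

/-- The largest modulus of a theta constant. The modular group permutes the theta constants up to
automorphy factors, so this behaves like the modulus of a modular form of weight `1 / 2`. -/
def thetaMax (τ : ℂ) : ℝ := max (max ‖thetaThree τ‖ ‖thetaFour τ‖) ‖thetaTwo τ‖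

lemma thetaMax_nonneg (τ : ℂ) : 0 ≤ thetaMax τ := le_max_of_le_right (norm_nonneg _)

lemma norm_jacobiTheta_le_thetaMax (τ : ℂ) : ‖jacobiTheta τ‖ ≤ thetaMax τ := by
  rw [jacobiTheta_eq_jacobiTheta₂]
  exact le_max_of_le_left (le_max_left _ _)

lemma jacobiTheta₂_add_one_right (z τ : ℂ) :
    jacobiTheta₂ z (τ + 1) = jacobiTheta₂ (z + 1 / 2) τ := by
  refine tsum_congr fun n ↦ exp_eq_exp_iff_exists_int.2 ?_
  obtain ⟨k, hk⟩ := Int.even_mul_pred_self n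
  have hk' : (n : ℂ) * (n - 1) = k + k := by exact_mod_cast hk
  exact ⟨k, by linear_combination π * I * hk'⟩

lemma thetaThree_add_one (τ : ℂ) : thetaThree (τ + 1) = thetaFour τ := by
  simp only [thetaThree, thetaFour, jacobiTheta₂_add_one_right, zero_add]

lemma thetaFour_add_one (τ : ℂ) : thetaFour (τ + 1) = thetaThree τ := by
  have h := jacobiTheta₂_add_left 0 τ
  rw [zero_add] at h
  rw [thetaFour, thetaThree, jacobiTheta₂_add_one_right, add_halves, h]

lemma norm_thetaTwo_add_one (τ : ℂ) : ‖thetaTwo (τ + 1)‖ = ‖thetaTwo τ‖ := by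
  have hexp : cexp (π * I * (τ + 1) / 4) = cexp (π * I * τ / 4) * cexp ((π / 4 : ℝ) * I) := by
    rw [← Complex.exp_add]
    push_cast
    ring_nf
  rw [thetaTwo, thetaTwo, jacobiTheta₂_add_one_right,
    show (τ + 1) / 2 + 1 / 2 = τ / 2 + 1 by ring, jacobiTheta₂_add_left, hexp]
  simp only [norm_mul, norm_exp_ofReal_mul_I, mul_one]

lemma thetaMax_add_one (τ : ℂ) : thetaMax (τ + 1) = thetaMax τ := by
  rw [thetaMax, thetaThree_add_one, thetaFour_add_one, norm_thetaTwo_add_one,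
    max_comm ‖thetaFour τ‖, thetaMax]

lemma thetaThree_neg_one_div {τ : ℂ} (hτ : τ ≠ 0) :
    thetaThree (-1 / τ) = (-I * τ) ^ (1 / 2 : ℂ) * thetaThree τ := by
  have : (-I * τ) ^ (1 / 2 : ℂ) ≠ 0 := by simp [cpow_eq_zero_iff, hτ]
  simp only [thetaThree, jacobiTheta₂_functional_equation 0 τ]
  field_simp
  simp

lemma thetaTwo_neg_one_div {τ : ℂ} (hτ : τ ≠ 0) :
    thetaTwo (-1 / τ) = (-I * τ) ^ (1 / 2 : ℂ) * thetaFour τ := by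
  have : (-I * τ) ^ (1 / 2 : ℂ) ≠ 0 := by simp [cpow_eq_zero_iff, hτ]
  simp only [thetaFour, thetaTwo, jacobiTheta₂_functional_equation (1 / 2) τ]
  rw [show -1 / τ / 2 = -(1 / 2 / τ) by ring, jacobiTheta₂_neg_left,
    show π * I * (-1 / τ) / 4 = -π * I * (1 / 2) ^ 2 / τ by ring]
  field_simp

lemma thetaFour_neg_one_div {τ : ℂ} (hτ : τ ≠ 0) :
    thetaFour (-1 / τ) = (-I * τ) ^ (1 / 2 : ℂ) * thetaTwo τ := by
  have : (-I * τ) ^ (1 / 2 : ℂ) ≠ 0 := by simp [cpow_eq_zero_iff, hτ]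
  simp only [thetaFour, thetaTwo, jacobiTheta₂_functional_equation (τ / 2) τ]
  rw [show τ / 2 / τ = 1 / 2 by field_simp,
    show π * I * τ / 4 = -(-π * I * (τ / 2) ^ 2 / τ) by field_simp; ring, Complex.exp_neg]
  field_simp [Complex.exp_ne_zero]

lemma thetaMax_neg_one_div {τ : ℂ} (hτ : τ ≠ 0) :
    thetaMax (-1 / τ) = ‖τ‖ ^ (1 / 2 : ℝ) * thetaMax τ := by
  have hroot : ‖(-I * τ) ^ (1 / 2 : ℂ)‖ = ‖τ‖ ^ (1 / 2 : ℝ) := by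
    simpa using norm_cpow_real (-I * τ) (1 / 2)
  simp only [thetaMax, thetaThree_neg_one_div hτ, thetaTwo_neg_one_div hτ,
    thetaFour_neg_one_div hτ, norm_mul, hroot]
  rw [← mul_max_of_nonneg _ _ (by positivity), ← mul_max_of_nonneg _ _ (by positivity),
    max_right_comm]

/-- The weight `2` normalisation `‖θ‖_max ^ 4 * Im τ`, which is invariant under the modular
group. -/
def thetaInvariant (τ : ℍ) : ℝ := thetaMax τ ^ 4 * τ.im

lemma thetaInvariant_S_smul (τ : ℍ) : thetaInvariant (ModularGroup.S • τ) = thetaInvariant τ := by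
  have hpos : 0 < ‖(τ : ℂ)‖ := norm_pos_iff.2 τ.ne_zero
  have hcoe : ((ModularGroup.S • τ : ℍ) : ℂ) = -1 / τ := by
    rw [UpperHalfPlane.modular_S_smul]
    simp [neg_div, inv_neg]
  have him : (ModularGroup.S • τ).im = τ.im / ‖(τ : ℂ)‖ ^ 2 := by
    rw [ModularGroup.im_smul_eq_div_normSq, ModularGroup.denom_S, normSq_eq_norm_sq]
  have hroot : (‖(τ : ℂ)‖ ^ (1 / 2 : ℝ)) ^ 4 = ‖(τ : ℂ)‖ ^ 2 := by
    rw [← Real.rpow_natCast, ← Real.rpow_mul hpos.le]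
    norm_num
  rw [thetaInvariant, hcoe, him, thetaMax_neg_one_div τ.ne_zero, mul_pow, hroot, thetaInvariant]
  field_simp

lemma thetaInvariant_T_smul (τ : ℍ) : thetaInvariant (ModularGroup.T • τ) = thetaInvariant τ := by
  rw [thetaInvariant, UpperHalfPlane.modular_T_smul, UpperHalfPlane.coe_vadd,
    UpperHalfPlane.vadd_im, add_comm, ofReal_one, thetaMax_add_one, thetaInvariant]

lemma thetaInvariant_smul (g : Matrix.SpecialLinearGroup (Fin 2) ℤ) (τ : ℍ) :
    thetaInvariant (g • τ) = thetaInvariant τ := by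
  have hg : g ∈ Subgroup.closure {ModularGroup.S, ModularGroup.T} := by
    simp [SpecialLinearGroup.SL2Z_generators]
  induction hg using Subgroup.closure_induction generalizing τ with
  | mem x hx =>
    rcases hx with rfl | rfl
    exacts [thetaInvariant_S_smul τ, thetaInvariant_T_smul τ]
  | one => rw [one_smul]
  | mul x y _ _ hx hy => rw [mul_smul, hx, hy]
  | inv x _ hx => rw [← hx (x⁻¹ • τ), smul_inv_smul]

/-- A bound for all theta constants in the half plane `1 / 2 ≤ Im τ`, which contains the standard
fundamental domain. -/
def thetaBound : ℝ := ∑' n : ℤ, rexp (-π * (1 / 2 * n ^ 2 - 2 * (1 / 4) * |n|))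

lemma summable_thetaBound :
    Summable fun n : ℤ ↦ rexp (-π * (1 / 2 * n ^ 2 - 2 * (1 / 4) * |n|)) := by
  simpa using summable_pow_mul_jacobiTheta₂_term_bound (1 / 4) (T := 1 / 2) (by norm_num) 0

lemma one_le_thetaBound : 1 ≤ thetaBound := by
  simpa [thetaBound] using summable_thetaBound.le_tsum 0 fun n _ ↦ (Real.exp_pos _).le

lemma norm_jacobiTheta₂_le_thetaBound {z τ : ℂ} (hz : |z.im| ≤ 1 / 4) (hτ : 1 / 2 ≤ τ.im) :
    ‖jacobiTheta₂ z τ‖ ≤ thetaBound :=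
  tsum_of_norm_bounded summable_thetaBound.hasSum fun n ↦ by
    simpa using norm_jacobiTheta₂_term_le (by norm_num) hz hτ n

lemma norm_thetaTwo_le_thetaBound {τ : ℂ} (hτ : 1 / 2 ≤ τ.im) : ‖thetaTwo τ‖ ≤ thetaBound := by
  rw [thetaTwo, jacobiTheta₂, ← tsum_mul_left]
  refine tsum_of_norm_bounded summable_thetaBound.hasSum fun n ↦ ?_
  have hre : (π * I * τ / 4).re = -π * τ.im / 4 := by
    rw [show π * I * τ / 4 = (π / 4 : ℝ) * (I * τ) by push_cast; ring, re_ofReal_mul]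
    simp only [I_mul_re]
    ring
  have hsq : 1 / 2 * ((n : ℝ) + 1 / 2) ^ 2 ≤ τ.im * ((n : ℝ) + 1 / 2) ^ 2 := by gcongr
  have hexponent :
      1 / 2 * (n : ℝ) ^ 2 - 2 * (1 / 4) * |(n : ℝ)| ≤ τ.im * ((n : ℝ) + 1 / 2) ^ 2 := by
    nlinarith [neg_le_abs (n : ℝ)]
  rw [norm_mul, norm_jacobiTheta₂_term, norm_exp, ← Real.exp_add, hre]
  gcongr
  have := mul_le_mul_of_nonneg_left hexponent Real.pi_pos.le
  rw [show (τ / 2).im = τ.im / 2 by simp]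
  push_cast
  linarith

lemma thetaMax_le_thetaBound {τ : ℂ} (hτ : 1 / 2 ≤ τ.im) : thetaMax τ ≤ thetaBound :=
  max_le (max_le (norm_jacobiTheta₂_le_thetaBound (by simp) hτ)
    (norm_jacobiTheta₂_le_thetaBound (by simp) hτ)) (norm_thetaTwo_le_thetaBound hτ)

/-- The constant in the Weyl-type bound for `jacobiTheta`. -/
def weylConst : ℝ := thetaBound ^ 2

lemma one_le_weylConst : 1 ≤ weylConst := one_le_pow₀ one_le_thetaBound

lemma bottom_row_ne_zero (g : Matrix.SpecialLinearGroup (Fin 2) ℤ) : g 1 0 ≠ 0 ∨ g 1 1 ≠ 0 := by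
  by_contra! h
  have hdet := g.det_coe
  rw [Matrix.det_fin_two] at hdet
  simp [h.1, h.2] at hdet

/-- Here `(c, d)` is the bottom row of the matrix that moves `τ` into the fundamental domain, where
the theta constants are bounded. -/
lemma exists_norm_jacobiTheta_sq_mul_le (τ : ℍ) :
    ∃ c d : ℤ, (c ≠ 0 ∨ d ≠ 0) ∧ ‖jacobiTheta τ‖ ^ 2 * ‖(c : ℂ) * τ + d‖ ≤ weylConst := by
  obtain ⟨g, hg⟩ := ModularGroup.exists_smul_mem_fd τ
  refine ⟨g 1 0, g 1 1, bottom_row_ne_zero g, ?_⟩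
  set r := ‖(g 1 0 : ℂ) * τ + g 1 1‖
  have him : 1 / 2 ≤ (g • τ).im := by
    nlinarith [ModularGroup.three_le_four_mul_im_sq_of_mem_fd hg, (g • τ).im_pos]
  have him_smul : (g • τ).im = τ.im / r ^ 2 := by
    rw [ModularGroup.im_smul_eq_div_normSq, ModularGroup.denom_apply, normSq_eq_norm_sq]
  have hr : 0 < r := by
    refine (norm_nonneg _).lt_of_ne' fun h ↦ ?_
    rw [show r = 0 from h, zero_pow two_ne_zero, div_zero] at him_smul
    linarith
  have htransform : thetaMax (g • τ : ℍ) ^ 4 = thetaMax τ ^ 4 * r ^ 2 := by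
    have h := thetaInvariant_smul g τ
    have := τ.im_pos
    rw [thetaInvariant, thetaInvariant, him_smul] at h
    field_simp at h
    rw [h, mul_comm]
  refine le_of_sq_le_sq ?_ (zero_le_one.trans one_le_weylConst)
  calc (‖jacobiTheta τ‖ ^ 2 * r) ^ 2 = ‖jacobiTheta τ‖ ^ 4 * r ^ 2 := by ring
    _ ≤ thetaMax τ ^ 4 * r ^ 2 := by gcongr; exact norm_jacobiTheta_le_thetaMax τ
    _ = thetaMax (g • τ : ℍ) ^ 4 := htransform.symm
    _ ≤ thetaBound ^ 4 := by gcongr; exacts [thetaMax_nonneg _, thetaMax_le_thetaBound him]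
    _ = weylConst ^ 2 := by rw [weylConst]; ring

end Theta

section Divisors

lemma rpow_eq_prod_primeFactors {k : ℕ} (hk : k ≠ 0) (ε : ℝ) :
    (k : ℝ) ^ ε = ∏ p ∈ k.primeFactors, ((p : ℝ) ^ ε) ^ k.factorization p := by
  conv_lhs => rw [← Nat.prod_factorization_pow_eq_self hk]
  rw [Finsupp.prod, Nat.support_factorization]
  push_cast
  rw [← Real.finsetProd_rpow _ _ fun p _ ↦ by positivity]
  exact prod_congr rfl fun p _ ↦ (Real.rpow_pow_comm (Nat.cast_nonneg p) _ _).symm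

lemma natCast_add_one_le_mul_pow {x : ℝ} (hx : 1 < x) (a : ℕ) :
    (a : ℝ) + 1 ≤ (1 + 1 / (x - 1)) * x ^ a := by
  have hx' : 0 < x - 1 := sub_pos.2 hx
  calc (a : ℝ) + 1 ≤ a + 1 + (1 / (x - 1) + a * (x - 1)) := le_add_of_nonneg_right (by positivity)
    _ = (1 + 1 / (x - 1)) * (1 + a * (x - 1)) := by field_simp; ring
    _ ≤ (1 + 1 / (x - 1)) * x ^ a := by gcongr; exact one_add_mul_sub_le_pow (by linarith) a

/-- Only the primes `p` with `p ^ ε < 2` contribute to the constant. -/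
lemma exists_card_divisors_le_rpow {ε : ℝ} (hε : 0 < ε) :
    ∃ C : ℝ, 1 ≤ C ∧ ∀ k : ℕ, k ≠ 0 → (#k.divisors : ℝ) ≤ C * (k : ℝ) ^ ε := by
  obtain ⟨P, hP⟩ := exists_nat_ge ((2 : ℝ) ^ ε⁻¹)
  have htwo : (1 : ℝ) < 2 ^ ε := Real.one_lt_rpow one_lt_two hε
  set A : ℝ := 1 + 1 / (2 ^ ε - 1)
  have hA : 1 ≤ A := le_add_of_nonneg_right (by have := sub_pos.2 htwo; positivity)
  have hlocal {p : ℕ} (hp : 2 ≤ p) (a : ℕ) :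
      (a : ℝ) + 1 ≤ (if p < P then A else 1) * ((p : ℝ) ^ ε) ^ a := by
    split_ifs with hpP
    · refine (natCast_add_one_le_mul_pow htwo a).trans ?_
      gcongr
      exact_mod_cast hp
    · have hpε : (2 : ℝ) ≤ (p : ℝ) ^ ε := by
        rw [← Real.rpow_inv_le_iff_of_pos zero_le_two (Nat.cast_nonneg p) hε]
        exact hP.trans (by exact_mod_cast not_lt.1 hpP)
      calc (a : ℝ) + 1 ≤ 2 ^ a := by exact_mod_cast Nat.lt_two_pow_self
        _ ≤ 1 * ((p : ℝ) ^ ε) ^ a := by rw [one_mul]; gcongr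
  refine ⟨A ^ P, one_le_pow₀ hA, fun k hk ↦ ?_⟩
  have hsmall : #{p ∈ k.primeFactors | p < P} ≤ P := by
    refine (card_le_card fun p hp ↦ ?_).trans_eq (card_range P)
    exact mem_range.2 (mem_filter.1 hp).2
  calc (#k.divisors : ℝ) = ∏ p ∈ k.primeFactors, ((k.factorization p : ℝ) + 1) := by
        rw [Nat.card_divisors hk]; push_cast; rfl
    _ ≤ ∏ p ∈ k.primeFactors, ((if p < P then A else 1) * ((p : ℝ) ^ ε) ^ k.factorization p) :=
        prod_le_prod (fun p _ ↦ by positivity) fun p hp ↦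
          hlocal (Nat.prime_of_mem_primeFactors hp).two_le _
    _ = A ^ #{p ∈ k.primeFactors | p < P} * (k : ℝ) ^ ε := by
        rw [prod_mul_distrib, ← rpow_eq_prod_primeFactors hk, prod_ite, prod_const,
          prod_const_one, mul_one]
    _ ≤ A ^ P * (k : ℝ) ^ ε := by gcongr

/-- The number of divisors of `k` not exceeding `Q`. -/
def truncDivisorCount (Q k : ℕ) : ℕ := #{d ∈ Icc 1 Q | d ∣ k}

/-- Sort the `B`-tuples of divisors of `k` by their least common multiple `m`. -/
lemma truncDivisorCount_pow_le (B Q k : ℕ) :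
    truncDivisorCount Q k ^ B ≤ ∑ m ∈ Icc 1 (Q ^ B) with m ∣ k, #m.divisors ^ B := by
  classical
  have hcover : Fintype.piFinset (fun _ : Fin B ↦ {d ∈ Icc 1 Q | d ∣ k}) ⊆
      {m ∈ Icc 1 (Q ^ B) | m ∣ k}.biUnion fun m ↦ Fintype.piFinset fun _ ↦ m.divisors := by
    intro t ht
    simp only [Fintype.mem_piFinset, mem_filter, mem_Icc] at ht
    have hlcm : univ.lcm t ≠ 0 := by
      simp only [Ne, Finset.lcm_eq_zero_iff, not_exists, not_and]
      exact fun i _ ↦ (Nat.one_le_iff_ne_zero.1 (ht i).1.1)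
    have hlcm_le : univ.lcm t ≤ Q ^ B :=
      calc univ.lcm t ≤ ∏ i, t i := Nat.le_of_dvd (prod_pos fun i _ ↦ (ht i).1.1)
            (Finset.lcm_dvd fun i hi ↦ dvd_prod_of_mem t hi)
        _ ≤ ∏ _i : Fin B, Q := prod_le_prod' fun i _ ↦ (ht i).1.2
        _ = Q ^ B := by simp
    simp only [mem_biUnion, mem_filter, mem_Icc, Fintype.mem_piFinset, Nat.mem_divisors]
    exact ⟨univ.lcm t, ⟨⟨Nat.one_le_iff_ne_zero.2 hlcm, hlcm_le⟩,
      Finset.lcm_dvd fun i _ ↦ (ht i).2⟩, fun i ↦ ⟨dvd_lcm (mem_univ i), hlcm⟩⟩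
  calc truncDivisorCount Q k ^ B
      = #(Fintype.piFinset fun _ : Fin B ↦ {d ∈ Icc 1 Q | d ∣ k}) := by
        simp [Fintype.card_piFinset, truncDivisorCount]
    _ ≤ ∑ m ∈ Icc 1 (Q ^ B) with m ∣ k, #(Fintype.piFinset fun _ : Fin B ↦ m.divisors) :=
        (card_le_card hcover).trans card_biUnion_le
    _ = ∑ m ∈ Icc 1 (Q ^ B) with m ∣ k, #m.divisors ^ B := by simp [Fintype.card_piFinset]

lemma card_filter_dvd_Icc_le (K m : ℕ) : (#{k ∈ Icc 1 K | m ∣ k} : ℝ) ≤ K / m := by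
  rw [show Icc 1 K = Ioc 0 K from rfl, Nat.Ioc_filter_dvd_card_eq_div]
  exact Nat.cast_div_le

lemma exists_card_divisors_pow_le_rpow {B : ℕ} (hB : B ≠ 0) {ε : ℝ} (hε : 0 < ε) :
    ∃ C : ℝ, 1 ≤ C ∧ ∀ k : ℕ, k ≠ 0 → (#k.divisors : ℝ) ^ B ≤ C * (k : ℝ) ^ ε := by
  have hB' : (0 : ℝ) < B := by positivity
  obtain ⟨C, hC, hdiv⟩ := exists_card_divisors_le_rpow (show 0 < ε / B by positivity)
  refine ⟨C ^ B, one_le_pow₀ hC, fun k hk ↦ ?_⟩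
  calc (#k.divisors : ℝ) ^ B ≤ (C * (k : ℝ) ^ (ε / B)) ^ B := by gcongr; exact hdiv k hk
    _ = C ^ B * (k : ℝ) ^ ε := by
      rw [mul_pow, ← Real.rpow_mul_natCast (Nat.cast_nonneg k), div_mul_cancel₀ _ hB'.ne']

lemma sum_truncDivisorCount_pow_le (B Q K : ℕ) :
    ∑ k ∈ Icc 1 K, (truncDivisorCount Q k : ℝ) ^ B ≤
      ∑ m ∈ Icc 1 (Q ^ B), (#m.divisors : ℝ) ^ B * (K / m) := by
  calc ∑ k ∈ Icc 1 K, (truncDivisorCount Q k : ℝ) ^ B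
      ≤ ∑ k ∈ Icc 1 K, ∑ m ∈ Icc 1 (Q ^ B), if m ∣ k then (#m.divisors : ℝ) ^ B else 0 := by
        gcongr with k
        rw [← sum_filter]
        exact_mod_cast truncDivisorCount_pow_le B Q k
    _ = ∑ m ∈ Icc 1 (Q ^ B), (#m.divisors : ℝ) ^ B * #{k ∈ Icc 1 K | m ∣ k} := by
        rw [sum_comm]
        refine sum_congr rfl fun m _ ↦ ?_
        rw [← sum_filter, sum_const, nsmul_eq_mul, mul_comm]
    _ ≤ ∑ m ∈ Icc 1 (Q ^ B), (#m.divisors : ℝ) ^ B * (K / m) := by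
        gcongr with m
        exact card_filter_dvd_Icc_le K m

lemma exists_sum_truncDivisorCount_pow_le {B : ℕ} (hB : B ≠ 0) {ε : ℝ} (hε : 0 < ε) :
    ∃ C : ℝ, 1 ≤ C ∧ ∀ Q K : ℕ,
      ∑ k ∈ Icc 1 K, (truncDivisorCount Q k : ℝ) ^ B ≤ C * K * (Q : ℝ) ^ ε := by
  set η : ℝ := ε / (2 * B) with hη
  have hη0 : 0 < η := by positivity
  obtain ⟨C, hC, hdiv⟩ := exists_card_divisors_pow_le_rpow hB hη0
  have hsum : Summable fun m : ℕ ↦ 1 / (m : ℝ) ^ (1 + η) :=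
    Real.summable_one_div_nat_rpow.2 (by linarith)
  have hone : 1 ≤ ∑' m : ℕ, 1 / (m : ℝ) ^ (1 + η) := by
    simpa using hsum.le_tsum 1 fun m _ ↦ by positivity
  refine ⟨C * ∑' m : ℕ, 1 / (m : ℝ) ^ (1 + η), one_le_mul_of_one_le_of_one_le hC hone,
    fun Q K ↦ ?_⟩
  have hterm {m : ℕ} (hm : m ∈ Icc 1 (Q ^ B)) :
      (#m.divisors : ℝ) ^ B * (K / m) ≤ C * K * (Q : ℝ) ^ ε * (1 / (m : ℝ) ^ (1 + η)) := by
    obtain ⟨hm1, hmQ⟩ := mem_Icc.1 hm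
    have hm0 : (0 : ℝ) < m := by exact_mod_cast hm1
    have hmε : (m : ℝ) ^ (η + η) ≤ (Q : ℝ) ^ ε :=
      calc (m : ℝ) ^ (η + η) ≤ ((Q : ℝ) ^ B) ^ (η + η) := by gcongr; exact_mod_cast hmQ
        _ = (Q : ℝ) ^ ε := by
          rw [← Real.rpow_natCast_mul (Nat.cast_nonneg Q), hη]
          congr 1
          field_simp
          norm_num
    calc (#m.divisors : ℝ) ^ B * (K / m) ≤ C * (m : ℝ) ^ η * (K / m) := by
          gcongr; exact hdiv m (by omega)
      _ = C * K * (m : ℝ) ^ (η + η) * (1 / (m : ℝ) ^ (1 + η)) := by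
          simp only [Real.rpow_add hm0, Real.rpow_one]; field_simp
      _ ≤ C * K * (Q : ℝ) ^ ε * (1 / (m : ℝ) ^ (1 + η)) := by gcongr
  calc ∑ k ∈ Icc 1 K, (truncDivisorCount Q k : ℝ) ^ B
      ≤ ∑ m ∈ Icc 1 (Q ^ B), (#m.divisors : ℝ) ^ B * (K / m) := sum_truncDivisorCount_pow_le B Q K
    _ ≤ ∑ m ∈ Icc 1 (Q ^ B), C * K * (Q : ℝ) ^ ε * (1 / (m : ℝ) ^ (1 + η)) :=
        sum_le_sum fun m hm ↦ hterm hm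
    _ = C * K * (Q : ℝ) ^ ε * ∑ m ∈ Icc 1 (Q ^ B), 1 / (m : ℝ) ^ (1 + η) :=
        (mul_sum _ _ _).symm
    _ ≤ C * K * (Q : ℝ) ^ ε * ∑' m : ℕ, 1 / (m : ℝ) ^ (1 + η) := by
        gcongr
        exact hsum.sum_le_tsum _ fun m _ ↦ by positivity
    _ = _ := by ring

end Divisors

section ExponentialSums

open scoped FourierTransform ComplexConjugate

lemma fourierChar_eq_one_iff {x : ℝ} : 𝐞 x = 1 ↔ ∃ k : ℤ, x = k := by
  rw [Real.fourierChar_apply', Circle.exp_eq_one]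
  refine exists_congr fun k ↦ ?_
  rw [mul_comm, mul_left_inj' Real.two_pi_pos.ne']

lemma fourierChar_intCast (k : ℤ) : 𝐞 (k : ℝ) = 1 := fourierChar_eq_one_iff.2 ⟨k, rfl⟩

lemma coe_fourierChar_add (x y : ℝ) : (𝐞 (x + y) : ℂ) = 𝐞 x * 𝐞 y := by
  rw [AddChar.map_add_eq_mul, Circle.coe_mul]

lemma conj_fourierChar (x : ℝ) : conj (𝐞 x : ℂ) = 𝐞 (-x) := by
  rw [AddChar.map_neg_eq_inv, Circle.coe_inv_eq_conj]

lemma fourierChar_nat_mul (n : ℕ) (x : ℝ) : 𝐞 (n * x) = 𝐞 x ^ n := by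
  rw [← nsmul_eq_mul, AddChar.map_nsmul_eq_pow]

lemma re_fourierChar (x : ℝ) : (𝐞 x : ℂ).re = Real.cos (2 * Real.pi * x) := by
  rw [Real.fourierChar_apply, Complex.exp_ofReal_mul_I_re]

lemma sum_range_fourierChar {M : ℕ} (hM : M ≠ 0) (k : ℤ) :
    ∑ j ∈ range M, (𝐞 (j * (k / M)) : ℂ) = if (M : ℤ) ∣ k then (M : ℂ) else 0 := by
  have hM0 : (M : ℝ) ≠ 0 := Nat.cast_ne_zero.2 hM
  have hone : 𝐞 ((k : ℝ) / M) = 1 ↔ (M : ℤ) ∣ k := by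
    rw [fourierChar_eq_one_iff]
    refine exists_congr fun d ↦ ?_
    rw [div_eq_iff hM0, mul_comm]
    norm_cast
  simp only [fourierChar_nat_mul, Circle.coe_pow]
  split_ifs with h
  · simp [hone.2 h]
  · have hpow : (𝐞 ((k : ℝ) / M) : ℂ) ^ M = 1 := by
      rw [← Circle.coe_pow, ← fourierChar_nat_mul, mul_div_cancel₀ _ hM0, fourierChar_intCast,
        Circle.coe_one]
    rw [geom_sum_eq (by rwa [Ne, Circle.coe_eq_one, hone]), hpow, sub_self, zero_div]

lemma norm_sum_mul_fourierChar_sq {ι : Type*} (s : Finset ι) (a : ι → ℂ) (θ : ι → ℝ) :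
    ((‖∑ i ∈ s, a i * 𝐞 (θ i)‖ ^ 2 : ℝ) : ℂ)
      = ∑ i ∈ s, ∑ j ∈ s, a i * conj (a j) * 𝐞 (θ i - θ j) := by
  push_cast
  rw [← Complex.mul_conj', map_sum, sum_mul_sum]
  refine sum_congr rfl fun i _ ↦ sum_congr rfl fun j _ ↦ ?_
  rw [map_mul, conj_fourierChar, sub_eq_add_neg, coe_fourierChar_add]
  ring

lemma norm_sum_fourierChar_sq {ι : Type*} (s : Finset ι) (θ : ι → ℝ) :
    ((‖∑ i ∈ s, (𝐞 (θ i) : ℂ)‖ ^ 2 : ℝ) : ℂ) = ∑ i ∈ s, ∑ j ∈ s, (𝐞 (θ i - θ j) : ℂ) := by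
  simpa using norm_sum_mul_fourierChar_sq s 1 θ

lemma sum_range_norm_sum_mul_fourierChar_sq {M : ℕ} (hM : M ≠ 0) {K : Finset ℤ}
    (hK : ∀ k ∈ K, ∀ l ∈ K, (M : ℤ) ∣ k - l → k = l) (a : ℤ → ℂ) :
    ∑ j ∈ range M, ‖∑ k ∈ K, a k * 𝐞 (j * (k / M))‖ ^ 2 = M * ∑ k ∈ K, ‖a k‖ ^ 2 := by
  apply Complex.ofReal_injective
  rw [Complex.ofReal_sum]
  have horth {k : ℤ} (hk : k ∈ K) :
      ∑ l ∈ K, ∑ j ∈ range M, a k * conj (a l) * (𝐞 (j * (k / M) - j * (l / M)) : ℂ)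
        = M * ‖a k‖ ^ 2 := by
    have hterm (l : ℤ) :
        ∑ j ∈ range M, a k * conj (a l) * (𝐞 (j * (k / M) - j * (l / M)) : ℂ)
          = a k * conj (a l) * if (M : ℤ) ∣ k - l then (M : ℂ) else 0 := by
      rw [← sum_range_fourierChar hM, mul_sum]
      refine sum_congr rfl fun j _ ↦ ?_
      rw [← mul_sub, ← sub_div, Int.cast_sub]
    simp only [hterm]
    rw [sum_eq_single_of_mem k hk fun l hl hlk ↦ by
      rw [if_neg fun h ↦ hlk (hK k hk l hl h).symm, mul_zero]]
    rw [sub_self, if_pos (dvd_zero _), Complex.mul_conj', mul_comm]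
  calc ∑ j ∈ range M, ((‖∑ k ∈ K, a k * 𝐞 (j * (k / M))‖ ^ 2 : ℝ) : ℂ)
      = ∑ k ∈ K, ∑ l ∈ K, ∑ j ∈ range M,
          a k * conj (a l) * (𝐞 (j * (k / M) - j * (l / M)) : ℂ) := by
        simp only [norm_sum_mul_fourierChar_sq]
        rw [sum_comm]
        exact sum_congr rfl fun k _ ↦ sum_comm
    _ = ∑ k ∈ K, M * (‖a k‖ : ℂ) ^ 2 := sum_congr rfl fun k hk ↦ horth hk
    _ = _ := by push_cast [mul_sum]; rfl

/-- The frequencies `j / M`, `0 ≤ j < M`: a discrete model of the circle `ℝ / ℤ`. -/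
def fracGrid (M : ℕ) : Finset ℝ := (range M).image fun j : ℕ ↦ (j : ℝ) / M

lemma natCast_div_injective {M : ℕ} (hM : M ≠ 0) : Function.Injective fun j : ℕ ↦ (j : ℝ) / M :=
  fun _ _ h ↦ Nat.cast_injective ((div_left_inj' (Nat.cast_ne_zero.2 hM)).1 h)

lemma sum_fracGrid {R : Type*} [AddCommMonoid R] {M : ℕ} (hM : M ≠ 0) (f : ℝ → R) :
    ∑ α ∈ fracGrid M, f α = ∑ j ∈ range M, f (j / M) :=
  sum_image (natCast_div_injective hM).injOn

lemma sum_fracGrid_norm_sum_mul_fourierChar_sq {M : ℕ} (hM : M ≠ 0) {K : Finset ℤ}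
    (hK : ∀ k ∈ K, ∀ l ∈ K, (M : ℤ) ∣ k - l → k = l) (a : ℤ → ℂ) :
    ∑ α ∈ fracGrid M, ‖∑ k ∈ K, a k * 𝐞 (k * α)‖ ^ 2 = M * ∑ k ∈ K, ‖a k‖ ^ 2 := by
  rw [sum_fracGrid hM, ← sum_range_norm_sum_mul_fourierChar_sq hM hK]
  refine sum_congr rfl fun j _ ↦ ?_
  simp only [mul_div_left_comm]

/-- The Fourier transform at `k ∈ ℤ` of the indicator function of a set of frequencies. -/
def expSum (E : Finset ℝ) (k : ℤ) : ℂ := ∑ α ∈ E, (𝐞 (k * α) : ℂ)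

lemma norm_expSum_le_card (E : Finset ℝ) (k : ℤ) : ‖expSum E k‖ ≤ #E :=
  (norm_sum_le _ _).trans_eq (by simp only [Circle.norm_coe, sum_const, nsmul_eq_mul, mul_one])

lemma norm_expSum_neg (E : Finset ℝ) (k : ℤ) : ‖expSum E (-k)‖ = ‖expSum E k‖ := by
  rw [← Complex.norm_conj (expSum E k), expSum, expSum, map_sum]
  refine congrArg norm (sum_congr rfl fun α _ ↦ ?_)
  rw [conj_fourierChar, Int.cast_neg, neg_mul]

lemma norm_expSum_natAbs (E : Finset ℝ) (k : ℤ) : ‖expSum E k.natAbs‖ = ‖expSum E k‖ := by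
  rcases Int.natAbs_eq k with h | h
  · rw [← h]
  · conv_rhs => rw [h, norm_expSum_neg]

lemma sum_range_norm_expSum_sq {M : ℕ} (hM : M ≠ 0) {E : Finset ℝ} (hE : E ⊆ fracGrid M) :
    ∑ k ∈ range M, ‖expSum E k‖ ^ 2 = M * #E := by
  obtain ⟨J, hJ, rfl⟩ := subset_image_iff.1 hE
  have hinj := natCast_div_injective hM
  have hincong : ∀ k ∈ J.map Nat.castEmbedding, ∀ l ∈ J.map (Nat.castEmbedding (R := ℤ)),
      (M : ℤ) ∣ k - l → k = l := by
    simp only [mem_map, Nat.castEmbedding_apply]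
    rintro _ ⟨k, hk, rfl⟩ _ ⟨l, hl, rfl⟩ hdvd
    have hkM := mem_range.1 (hJ hk)
    have hlM := mem_range.1 (hJ hl)
    exact sub_eq_zero.1 (Int.eq_zero_of_abs_lt_dvd hdvd (by rw [abs_lt]; omega))
  have hparseval := sum_range_norm_sum_mul_fourierChar_sq hM hincong 1
  simp only [sum_map, Nat.castEmbedding_apply, Pi.one_apply, one_mul, norm_one, one_pow, sum_const,
    nsmul_eq_mul, mul_one, card_map] at hparseval
  rw [card_image_of_injective J hinj, ← hparseval]
  refine sum_congr rfl fun k _ ↦ ?_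
  rw [expSum, sum_image hinj.injOn]
  rfl

lemma sum_Icc_norm_expSum_sq_le {M K : ℕ} (hK : K < M) {E : Finset ℝ} (hE : E ⊆ fracGrid M) :
    ∑ k ∈ Icc 1 K, ‖expSum E k‖ ^ 2 ≤ M * #E := by
  rw [← sum_range_norm_expSum_sq (by omega) hE]
  refine sum_le_sum_of_subset_of_nonneg (fun k hk ↦ ?_) fun _ _ _ ↦ by positivity
  exact mem_range.2 ((mem_Icc.1 hk).2.trans_lt hK)

end ExponentialSums

section NearPairs

open scoped FourierTransform ComplexConjugate

lemma half_le_re_fourierChar {x : ℝ} (hx : |x| ≤ 1 / 8) : 1 / 2 ≤ (𝐞 x : ℂ).re := by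
  have hsq : (2 * Real.pi * x) ^ 2 ≤ 1 := by
    have hpi := Real.pi_pos
    rw [sq_le_one_iff_abs_le_one, abs_mul, abs_of_pos (by positivity)]
    nlinarith [Real.pi_lt_four, abs_nonneg x]
  rw [re_fourierChar]
  linarith [Real.one_sub_sq_div_two_le_cos (x := 2 * Real.pi * x)]

lemma half_le_norm_sum_range_fourierChar {L : ℕ} {φ : ℝ} {d : ℤ} (h : |φ - d| * (8 * L) ≤ 1) :
    (L : ℝ) / 2 ≤ ‖∑ l ∈ range L, (𝐞 (l * φ) : ℂ)‖ := by
  have hre : ∀ l ∈ range L, (1 / 2 : ℝ) ≤ (𝐞 (l * φ) : ℂ).re := by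
    intro l hl
    have hlL : (l : ℝ) ≤ L := by exact_mod_cast (mem_range.1 hl).le
    have hshift : (𝐞 (l * φ) : ℂ) = 𝐞 (l * (φ - d)) := by
      rw [show (l : ℝ) * φ = l * (φ - d) + ((l * d : ℤ) : ℝ) by push_cast; ring,
        coe_fourierChar_add, fourierChar_intCast, Circle.coe_one, mul_one]
    rw [hshift]
    apply half_le_re_fourierChar
    rw [abs_mul, Nat.abs_cast]
    nlinarith [abs_nonneg (φ - d)]
  calc (L : ℝ) / 2 = ∑ l ∈ range L, (1 / 2 : ℝ) := by
        rw [sum_const, card_range, nsmul_eq_mul, mul_one_div]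
    _ ≤ ∑ l ∈ range L, (𝐞 (l * φ) : ℂ).re := sum_le_sum hre
    _ ≤ _ := by rw [← Complex.re_sum]; exact Complex.re_le_norm _

lemma sum_range_natAbs_sub_le {L l : ℕ} (hl : l < L) {u : ℕ → ℝ} (hu : ∀ h, 0 ≤ u h) :
    ∑ l' ∈ range L, u ((l : ℤ) - l').natAbs ≤ 2 * ∑ h ∈ range L, u h := by
  have hhalf {s : Finset ℕ} (hs : s ⊆ range L)
      (hinj : Set.InjOn (fun l' : ℕ ↦ ((l : ℤ) - l').natAbs) s) :
      ∑ l' ∈ s, u ((l : ℤ) - l').natAbs ≤ ∑ h ∈ range L, u h := by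
    rw [← sum_image (f := u) hinj]
    refine sum_le_sum_of_subset_of_nonneg (image_subset_iff.2 fun l' hl' ↦ ?_) fun h _ _ ↦ hu h
    have := mem_range.1 (hs hl')
    exact mem_range.2 (by omega)
  rw [← sum_filter_add_sum_filter_not (range L) (· ≤ l), two_mul]
  refine add_le_add (hhalf (filter_subset _ _) fun a ha b hb hab ↦ ?_)
    (hhalf (filter_subset _ _) fun a ha b hb hab ↦ ?_)
  all_goals
    simp only [coe_filter, Set.mem_ofPred_eq] at ha hb hab
    omega

open Classical in
/-- The pairs of frequencies in `E` whose difference, multiplied by `q`, is within `1 / (8 L)` of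
an integer. -/
def nearPairs (E : Finset ℝ) (L q : ℕ) : Finset (ℝ × ℝ) :=
  {p ∈ E ×ˢ E | ∃ d : ℤ, |q * (p.1 - p.2) - d| * (8 * L) ≤ 1}

lemma mem_nearPairs {E : Finset ℝ} {L q : ℕ} {p : ℝ × ℝ} :
    p ∈ nearPairs E L q ↔ p ∈ E ×ˢ E ∧ ∃ d : ℤ, |q * (p.1 - p.2) - d| * (8 * L) ≤ 1 := by
  classical exact mem_filter

lemma sum_product_norm_sum_range_fourierChar_sq (E : Finset ℝ) (L q : ℕ) :
    ∑ p ∈ E ×ˢ E, ‖∑ l ∈ range L, (𝐞 (l * (q * (p.1 - p.2))) : ℂ)‖ ^ 2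
      = ∑ l ∈ range L, ∑ l' ∈ range L, ‖expSum E (q * ((l : ℤ) - l'))‖ ^ 2 := by
  apply Complex.ofReal_injective
  simp only [Complex.ofReal_sum, expSum, norm_sum_fourierChar_sq]
  rw [sum_comm]
  refine sum_congr rfl fun l _ ↦ ?_
  rw [sum_comm]
  refine sum_congr rfl fun l' _ ↦ ?_
  rw [sum_product]
  refine sum_congr rfl fun α _ ↦ sum_congr rfl fun β _ ↦ ?_
  push_cast
  ring_nf

lemma sum_range_norm_expSum_mul_sub_sq_le (E : Finset ℝ) (L q : ℕ) :
    ∑ l ∈ range L, ∑ l' ∈ range L, ‖expSum E (q * ((l : ℤ) - l'))‖ ^ 2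
      ≤ L * (2 * ((#E : ℝ) ^ 2 + ∑ h ∈ Ico 1 L, ‖expSum E (q * h : ℕ)‖ ^ 2)) := by
  have hinner : ∀ l ∈ range L, ∑ l' ∈ range L, ‖expSum E (q * ((l : ℤ) - l'))‖ ^ 2
      ≤ 2 * ((#E : ℝ) ^ 2 + ∑ h ∈ Ico 1 L, ‖expSum E (q * h : ℕ)‖ ^ 2) := by
    intro l hl
    have hL : 0 < L := (Nat.zero_le l).trans_lt (mem_range.1 hl)
    calc ∑ l' ∈ range L, ‖expSum E (q * ((l : ℤ) - l'))‖ ^ 2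
        = ∑ l' ∈ range L, ‖expSum E (q * ((l : ℤ) - l').natAbs : ℕ)‖ ^ 2 := by
          refine sum_congr rfl fun l' _ ↦ ?_
          rw [← norm_expSum_natAbs, Int.natAbs_mul, Int.natAbs_natCast]
      _ ≤ 2 * ∑ h ∈ range L, ‖expSum E (q * h : ℕ)‖ ^ 2 :=
          sum_range_natAbs_sub_le (mem_range.1 hl) (u := fun h ↦ ‖expSum E (q * h : ℕ)‖ ^ 2)
            fun h ↦ by positivity
      _ ≤ _ := by
          rw [range_eq_Ico, sum_eq_sum_Ico_succ_bot hL]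
          gcongr
          exact norm_expSum_le_card _ _
  calc _ ≤ _ := sum_le_card_nsmul _ _ _ hinner
    _ = _ := by rw [card_range, nsmul_eq_mul]

/-- Fejér's trick: each near pair contributes at least `(L / 2) ^ 2` to the sum of
`‖∑ l < L, e(l q (α - β))‖ ^ 2` over all pairs. -/
lemma card_nearPairs_le {L : ℕ} (hL : 0 < L) (E : Finset ℝ) (q : ℕ) :
    (#(nearPairs E L q) : ℝ)
      ≤ 8 / L * ((#E : ℝ) ^ 2 + ∑ h ∈ Ico 1 L, ‖expSum E (q * h : ℕ)‖ ^ 2) := by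
  have hL0 : (0 : ℝ) < L := Nat.cast_pos.2 hL
  set S : ℝ := (#E : ℝ) ^ 2 + ∑ h ∈ Ico 1 L, ‖expSum E (q * h : ℕ)‖ ^ 2
  have hcount : (#(nearPairs E L q) : ℝ) * (L / 2) ^ 2 ≤ L * (2 * S) := calc
    (#(nearPairs E L q) : ℝ) * (L / 2) ^ 2
        ≤ ∑ p ∈ nearPairs E L q, ‖∑ l ∈ range L, (𝐞 (l * (q * (p.1 - p.2))) : ℂ)‖ ^ 2 := by
          rw [← nsmul_eq_mul]
          refine card_nsmul_le_sum _ _ _ fun p hp ↦ ?_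
          obtain ⟨d, hd⟩ := (mem_nearPairs.1 hp).2
          gcongr
          exact half_le_norm_sum_range_fourierChar hd
      _ ≤ ∑ p ∈ E ×ˢ E, ‖∑ l ∈ range L, (𝐞 (l * (q * (p.1 - p.2))) : ℂ)‖ ^ 2 :=
          sum_le_sum_of_subset_of_nonneg (fun p hp ↦ (mem_nearPairs.1 hp).1)
            fun _ _ _ ↦ by positivity
      _ ≤ L * (2 * S) := by
          rw [sum_product_norm_sum_range_fourierChar_sq]
          exact sum_range_norm_expSum_mul_sub_sq_le E L q
  rw [div_mul_eq_mul_div, le_div_iff₀ hL0]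
  refine le_of_mul_le_mul_left ?_ hL0
  linarith

lemma sum_norm_expSum_mul_sq_le {Q L K : ℕ} (hK : Q * L ≤ K) (E : Finset ℝ) :
    ∑ q ∈ Icc 1 Q, ∑ h ∈ Ico 1 L, ‖expSum E (q * h : ℕ)‖ ^ 2
      ≤ ∑ k ∈ Icc 1 K, truncDivisorCount Q k * ‖expSum E k‖ ^ 2 := by
  calc ∑ q ∈ Icc 1 Q, ∑ h ∈ Ico 1 L, ‖expSum E (q * h : ℕ)‖ ^ 2
      ≤ ∑ q ∈ Icc 1 Q, ∑ k ∈ Icc 1 K with q ∣ k, ‖expSum E k‖ ^ 2 := by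
        refine sum_le_sum fun q hq ↦ ?_
        obtain ⟨hq1, hqQ⟩ := mem_Icc.1 hq
        have hinj := mul_right_injective₀ (Nat.one_le_iff_ne_zero.1 hq1)
        rw [← sum_image (f := fun k : ℕ ↦ ‖expSum E k‖ ^ 2) hinj.injOn]
        refine sum_le_sum_of_subset_of_nonneg (image_subset_iff.2 fun h hh ↦ ?_)
          fun _ _ _ ↦ by positivity
        obtain ⟨hh1, hhL⟩ := mem_Ico.1 hh
        exact mem_filter.2 ⟨mem_Icc.2 ⟨Nat.mul_pos hq1 hh1,
          (Nat.mul_le_mul hqQ hhL.le).trans hK⟩, dvd_mul_right q h⟩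
    _ = ∑ k ∈ Icc 1 K, truncDivisorCount Q k * ‖expSum E k‖ ^ 2 := by
        simp only [sum_filter]
        rw [sum_comm]
        refine sum_congr rfl fun k _ ↦ ?_
        rw [← sum_filter, sum_const, nsmul_eq_mul, truncDivisorCount]

open Classical in
lemma card_biUnion_nearPairs_le {Q L K : ℕ} (hL : 0 < L) (hK : Q * L ≤ K) (E : Finset ℝ) :
    (#((Icc 1 Q).biUnion (nearPairs E L)) : ℝ)
      ≤ 8 / L * (Q * (#E : ℝ) ^ 2
          + ∑ k ∈ Icc 1 K, truncDivisorCount Q k * ‖expSum E k‖ ^ 2) := by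
  calc (#((Icc 1 Q).biUnion (nearPairs E L)) : ℝ)
      ≤ ∑ q ∈ Icc 1 Q, (#(nearPairs E L q) : ℝ) := by exact_mod_cast card_biUnion_le
    _ ≤ ∑ q ∈ Icc 1 Q,
          8 / L * ((#E : ℝ) ^ 2 + ∑ h ∈ Ico 1 L, ‖expSum E (q * h : ℕ)‖ ^ 2) :=
        sum_le_sum fun q _ ↦ card_nearPairs_le hL E q
    _ = 8 / L * (Q * (#E : ℝ) ^ 2
          + ∑ q ∈ Icc 1 Q, ∑ h ∈ Ico 1 L, ‖expSum E (q * h : ℕ)‖ ^ 2) := by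
        rw [← mul_sum, sum_add_distrib, sum_const, Nat.card_Icc, Nat.add_sub_cancel, nsmul_eq_mul]
    _ ≤ _ := by gcongr; exact sum_norm_expSum_mul_sq_le hK E

end NearPairs

section WeylSums

open scoped FourierTransform

/-- The Gaussian-weighted Weyl sum `∑ x, exp(-π x² / N²) e(α x²)` of length `N` at the
frequency `α`, encoded as a value of the Jacobi theta function
(see `hasSum_gaussWeylSum`). -/
def gaussWeylSum (N : ℕ) (α : ℝ) : ℂ := jacobiTheta (2 * α + Complex.I / N ^ 2)

lemma re_gaussWeyl_arg (N : ℕ) (α : ℝ) : (2 * α + Complex.I / N ^ 2 : ℂ).re = 2 * α := by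
  rw [show (2 * α + Complex.I / N ^ 2 : ℂ) = ((2 * α : ℝ) : ℂ) + ((1 / N ^ 2 : ℝ) : ℂ) * Complex.I
    by push_cast; ring]
  simp only [Complex.add_re, Complex.re_ofReal_mul, Complex.ofReal_re, Complex.I_re, mul_zero,
    add_zero]

lemma im_gaussWeyl_arg (N : ℕ) (α : ℝ) :
    (2 * α + Complex.I / N ^ 2 : ℂ).im = 1 / (N : ℝ) ^ 2 := by
  rw [show (2 * α + Complex.I / N ^ 2 : ℂ) = ((2 * α : ℝ) : ℂ) + ((1 / N ^ 2 : ℝ) : ℂ) * Complex.I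
    by push_cast; ring]
  simp only [Complex.add_im, Complex.im_ofReal_mul, Complex.ofReal_im, Complex.I_im, mul_one,
    zero_add]

lemma hasSum_gaussWeylSum {N : ℕ} (hN : 0 < N) (α : ℝ) :
    HasSum (fun x : ℤ ↦ ((Real.exp (-Real.pi * x ^ 2 / N ^ 2) : ℝ) : ℂ) * 𝐞 (α * x ^ 2))
      (gaussWeylSum N α) := by
  have him : 0 < (2 * α + Complex.I / N ^ 2 : ℂ).im := by
    rw [im_gaussWeyl_arg]
    positivity
  rw [gaussWeylSum, jacobiTheta_eq_jacobiTheta₂]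
  convert hasSum_jacobiTheta₂_term 0 him using 2 with x
  rw [jacobiTheta₂_term, Real.fourierChar_apply, Complex.ofReal_exp, ← Complex.exp_add]
  congr 1
  push_cast
  linear_combination (-(Real.pi : ℂ) * x ^ 2 / N ^ 2) * Complex.I_sq

lemma exists_norm_gaussWeylSum_sq_mul_le {N : ℕ} (hN : 0 < N) (α : ℝ) :
    ∃ c d : ℤ, (c ≠ 0 ∨ d ≠ 0) ∧ ‖gaussWeylSum N α‖ ^ 2 * |2 * c * α + d| ≤ weylConst ∧
      ‖gaussWeylSum N α‖ ^ 2 * |(c : ℝ)| ≤ weylConst * N ^ 2 := by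
  have him : 0 < (2 * α + Complex.I / N ^ 2 : ℂ).im := by
    rw [im_gaussWeyl_arg]
    positivity
  obtain ⟨c, d, hcd, h⟩ := exists_norm_jacobiTheta_sq_mul_le ⟨_, him⟩
  have hre := Complex.abs_re_le_norm ((c : ℂ) * (2 * α + Complex.I / N ^ 2) + d)
  have him := Complex.abs_im_le_norm ((c : ℂ) * (2 * α + Complex.I / N ^ 2) + d)
  rw [← Complex.ofReal_intCast, Complex.add_re, Complex.re_ofReal_mul, re_gaussWeyl_arg,
    Complex.intCast_re] at hre
  rw [← Complex.ofReal_intCast, Complex.add_im, Complex.im_ofReal_mul, im_gaussWeyl_arg,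
    Complex.intCast_im, add_zero, mul_one_div, abs_div, abs_sq] at him
  refine ⟨c, d, hcd, ?_, ?_⟩
  · rw [show 2 * c * α + d = c * (2 * α) + d by ring]
    exact (mul_le_mul_of_nonneg_left hre (sq_nonneg _)).trans h
  · rw [← div_le_iff₀ (by positivity), mul_div_assoc]
    exact (mul_le_mul_of_nonneg_left him (sq_nonneg _)).trans h

lemma one_le_abs_intCast {c : ℤ} (hc : c ≠ 0) : (1 : ℝ) ≤ |(c : ℝ)| :=
  mod_cast Int.one_le_abs hc

lemma norm_gaussWeylSum_le {N : ℕ} (hN : 0 < N) (α : ℝ) :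
    ‖gaussWeylSum N α‖ ≤ weylConst * N := by
  have hW := one_le_weylConst
  have hN1 : (1 : ℝ) ≤ N := Nat.one_le_cast.2 hN
  obtain ⟨c, d, hcd, h1, h2⟩ := exists_norm_gaussWeylSum_sq_mul_le hN α
  have hsq : ‖gaussWeylSum N α‖ ^ 2 ≤ weylConst * N ^ 2 := by
    rcases eq_or_ne c 0 with rfl | hc
    · have hd := one_le_abs_intCast (hcd.resolve_left (not_not_intro rfl))
      rw [Int.cast_zero, mul_zero, zero_mul, zero_add] at h1
      calc ‖gaussWeylSum N α‖ ^ 2 ≤ weylConst :=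
            (le_mul_of_one_le_right (sq_nonneg _) hd).trans h1
        _ ≤ weylConst * N ^ 2 := le_mul_of_one_le_right (by positivity) (one_le_pow₀ hN1)
    · exact (le_mul_of_one_le_right (sq_nonneg _) (one_le_abs_intCast hc)).trans h2
  refine le_of_sq_le_sq ?_ (by positivity)
  calc ‖gaussWeylSum N α‖ ^ 2 ≤ weylConst * N ^ 2 := hsq
    _ ≤ weylConst ^ 2 * N ^ 2 := by gcongr; exact le_self_pow₀ hW two_ne_zero
    _ = (weylConst * N) ^ 2 := (mul_pow ..).symm

/-- Weyl's inequality in converse form: a large sum forces the frequency onto a major arc. -/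
lemma exists_abs_mul_sub_le_of_le_norm_gaussWeylSum {N R : ℕ} (hR : 0 < R) (hRN : R < N) {α : ℝ}
    (hα : weylConst / R * N ≤ ‖gaussWeylSum N α‖) :
    ∃ q ∈ Icc (1 : ℕ) (2 * R ^ 2), ∃ d : ℤ, |(q : ℝ) * α - d| ≤ R ^ 2 / N ^ 2 := by
  have hW := one_le_weylConst
  have : (0 : ℝ) < R := Nat.cast_pos.2 hR
  have hN0 : (0 : ℝ) < N := Nat.cast_pos.2 (hR.trans hRN)
  obtain ⟨c, d, hcd, h1, h2⟩ := exists_norm_gaussWeylSum_sq_mul_le (hR.trans hRN) α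
  have hlow {y : ℝ} (hy : 0 ≤ y) :
      weylConst * (N ^ 2 / R ^ 2 * y) ≤ ‖gaussWeylSum N α‖ ^ 2 * y := calc
    weylConst * (N ^ 2 / R ^ 2 * y) ≤ weylConst ^ 2 * (N ^ 2 / R ^ 2 * y) := by
      gcongr; exact le_self_pow₀ hW two_ne_zero
    _ = (weylConst / R * N) ^ 2 * y := by ring
    _ ≤ ‖gaussWeylSum N α‖ ^ 2 * y := by gcongr
  have hdist : |2 * c * α + d| ≤ R ^ 2 / N ^ 2 := by
    have := (hlow (abs_nonneg _)).trans h1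
    rw [mul_le_iff_le_one_right (by positivity), div_mul_eq_mul_div, div_le_one (by positivity)]
      at this
    rwa [le_div_iff₀' (by positivity)]
  have hcR : c.natAbs ≤ R ^ 2 := by
    have := le_of_mul_le_mul_left ((hlow (abs_nonneg _)).trans h2) (by positivity)
    rw [div_mul_eq_mul_div, div_le_iff₀ (by positivity),
      mul_le_mul_iff_right₀ (by positivity), ← Int.cast_abs, Int.abs_eq_natAbs] at this
    exact_mod_cast this
  have hc : c ≠ 0 := by
    rintro rfl
    have hd := one_le_abs_intCast (hcd.resolve_left (not_not_intro rfl))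
    rw [Int.cast_zero, mul_zero, zero_mul, zero_add] at hdist
    have hlt : (R : ℝ) ^ 2 / N ^ 2 < 1 := by
      rw [div_lt_one (by positivity)]
      gcongr
    linarith
  refine ⟨2 * c.natAbs, mem_Icc.2 ⟨by have := Int.natAbs_pos.2 hc; omega, by omega⟩, ?_⟩
  rw [Nat.cast_mul, Nat.cast_natAbs, Int.cast_abs, Nat.cast_ofNat]
  rcases abs_choice (c : ℝ) with h | h <;> rw [h]
  · exact ⟨-d, by rwa [Int.cast_neg, sub_neg_eq_add]⟩
  · refine ⟨d, ?_⟩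
    rwa [abs_sub_comm, show (d : ℝ) - 2 * -(c : ℝ) * α = 2 * c * α + d by ring]

end WeylSums

section LargeSieve

open scoped FourierTransform ComplexConjugate

/-- The exponential sum `∑ |x| ≤ N, g(x) e(α x²)`. -/
def squareExpSum (N : ℕ) (g : ℤ → ℂ) (α : ℝ) : ℂ :=
  ∑ x ∈ Icc (-(N : ℤ)) N, g x * 𝐞 (α * x ^ 2)

lemma one_le_exp_pi_mul_gauss {N : ℕ} (hN : 0 < N) {x : ℤ} (hx : x ∈ Icc (-(N : ℤ)) N) :
    1 ≤ Real.exp Real.pi * Real.exp (-Real.pi * x ^ 2 / N ^ 2) := by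
  have hxN : (x : ℝ) ^ 2 ≤ (N : ℝ) ^ 2 :=
    sq_le_sq' (by exact_mod_cast (mem_Icc.1 hx).1) (by exact_mod_cast (mem_Icc.1 hx).2)
  have hle : Real.pi * (x ^ 2 / N ^ 2) ≤ Real.pi :=
    mul_le_of_le_one_right Real.pi_pos.le ((div_le_one (by positivity)).2 hxN)
  rw [← Real.exp_add, Real.one_le_exp_iff, neg_mul, neg_div, mul_div_assoc]
  linarith

/-- The cut-off `|x| ≤ N` is majorised by a Gaussian, so that opening the square produces
theta values. -/
lemma sum_norm_sum_mul_fourierChar_sq_le {N : ℕ} (hN : 0 < N) (E : Finset ℝ) {c : ℝ → ℂ}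
    (hc : ∀ α, ‖c α‖ ≤ 1) :
    ∑ x ∈ Icc (-(N : ℤ)) N, ‖∑ α ∈ E, c α * 𝐞 (α * x ^ 2)‖ ^ 2
      ≤ Real.exp Real.pi * ∑ α ∈ E, ∑ β ∈ E, ‖gaussWeylSum N (α - β)‖ := by
  set w : ℤ → ℝ := fun x ↦ Real.exp (-Real.pi * x ^ 2 / N ^ 2)
  set H : ℤ → ℂ := fun x ↦ ∑ α ∈ E, c α * 𝐞 (α * x ^ 2)
  have hsum : HasSum (fun x : ℤ ↦ ((w x * ‖H x‖ ^ 2 : ℝ) : ℂ))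
      (∑ α ∈ E, ∑ β ∈ E, c α * conj (c β) * gaussWeylSum N (α - β)) := by
    have hterm (x : ℤ) : ((w x * ‖H x‖ ^ 2 : ℝ) : ℂ)
        = ∑ α ∈ E, ∑ β ∈ E, c α * conj (c β) * (w x * 𝐞 ((α - β) * x ^ 2)) := by
      rw [Complex.ofReal_mul, norm_sum_mul_fourierChar_sq, mul_sum]
      refine sum_congr rfl fun α _ ↦ ?_
      rw [mul_sum]
      refine sum_congr rfl fun β _ ↦ ?_
      rw [sub_mul]
      ring
    simp only [hterm]
    exact hasSum_sum fun α _ ↦ hasSum_sum fun β _ ↦ (hasSum_gaussWeylSum hN _).mul_left _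
  have hre := Complex.hasSum_re hsum
  simp only [Complex.ofReal_re] at hre
  calc ∑ x ∈ Icc (-(N : ℤ)) N, ‖H x‖ ^ 2
      ≤ ∑ x ∈ Icc (-(N : ℤ)) N, Real.exp Real.pi * (w x * ‖H x‖ ^ 2) := by
        refine sum_le_sum fun x hx ↦ ?_
        rw [← mul_assoc]
        exact le_mul_of_one_le_left (by positivity) (one_le_exp_pi_mul_gauss hN hx)
    _ = Real.exp Real.pi * ∑ x ∈ Icc (-(N : ℤ)) N, w x * ‖H x‖ ^ 2 := (mul_sum _ _ _).symm
    _ ≤ Real.exp Real.pi * (∑ α ∈ E, ∑ β ∈ E, c α * conj (c β) * gaussWeylSum N (α - β)).re := by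
        gcongr
        exact sum_le_hasSum _ (fun x _ ↦ by positivity) hre
    _ ≤ Real.exp Real.pi * ∑ α ∈ E, ∑ β ∈ E, ‖gaussWeylSum N (α - β)‖ := by
        gcongr
        refine (Complex.re_le_norm _).trans (norm_sum_le_of_le _ fun α _ ↦
          norm_sum_le_of_le _ fun β _ ↦ ?_)
        rw [norm_mul, norm_mul, Complex.norm_conj]
        exact mul_le_of_le_one_left (norm_nonneg _) (mul_le_one₀ (hc α) (norm_nonneg _) (hc β))

lemma sq_sum_norm_squareExpSum_le {N : ℕ} (hN : 0 < N) (g : ℤ → ℂ) (E : Finset ℝ) :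
    (∑ α ∈ E, ‖squareExpSum N g α‖) ^ 2
      ≤ (∑ x ∈ Icc (-(N : ℤ)) N, ‖g x‖ ^ 2)
        * (Real.exp Real.pi * ∑ α ∈ E, ∑ β ∈ E, ‖gaussWeylSum N (α - β)‖) := by
  set F : ℝ → ℂ := squareExpSum N g
  set c : ℝ → ℂ := fun α ↦ conj (F α) / ‖F α‖
  have hc (α : ℝ) : ‖c α‖ ≤ 1 := by
    rw [norm_div, Complex.norm_conj, Complex.norm_real, norm_norm]
    exact div_self_le_one _
  have hcF (α : ℝ) : c α * F α = ‖F α‖ := by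
    rw [div_mul_eq_mul_div, Complex.conj_mul', sq, mul_self_div_self]
  have hswap : ((∑ α ∈ E, ‖F α‖ : ℝ) : ℂ)
      = ∑ x ∈ Icc (-(N : ℤ)) N, g x * ∑ α ∈ E, c α * 𝐞 (α * x ^ 2) := by
    rw [Complex.ofReal_sum, sum_congr rfl fun α _ ↦ (hcF α).symm]
    simp only [F, squareExpSum, mul_sum]
    rw [sum_comm]
    refine sum_congr rfl fun x _ ↦ sum_congr rfl fun α _ ↦ ?_
    ring
  have hle : ∑ α ∈ E, ‖F α‖
      ≤ ∑ x ∈ Icc (-(N : ℤ)) N, ‖g x‖ * ‖∑ α ∈ E, c α * 𝐞 (α * x ^ 2)‖ := by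
    simp only [← norm_mul]
    refine le_trans ?_ (norm_sum_le _ _)
    rw [← hswap, Complex.norm_real]
    exact Real.le_norm_self _
  calc (∑ α ∈ E, ‖F α‖) ^ 2
      ≤ (∑ x ∈ Icc (-(N : ℤ)) N, ‖g x‖ * ‖∑ α ∈ E, c α * 𝐞 (α * x ^ 2)‖) ^ 2 := by gcongr
    _ ≤ (∑ x ∈ Icc (-(N : ℤ)) N, ‖g x‖ ^ 2)
          * ∑ x ∈ Icc (-(N : ℤ)) N, ‖∑ α ∈ E, c α * 𝐞 (α * x ^ 2)‖ ^ 2 :=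
        sum_mul_sq_le_sq_mul_sq _ _ _
    _ ≤ _ := by
        gcongr
        exact sum_norm_sum_mul_fourierChar_sq_le hN E hc

end LargeSieve

section LargeLevelSets

/-- The terms with `truncDivisorCount Q k ≤ D` are controlled by Bessel's inequality, the others by
a moment of `truncDivisorCount Q` and the trivial bound on `expSum`. -/
lemma exists_sum_truncDivisorCount_mul_norm_expSum_sq_le (B : ℕ) {ε : ℝ} (hε : 0 < ε) :
    ∃ C : ℝ, 1 ≤ C ∧ ∀ (M K Q : ℕ) (E : Finset ℝ) (D : ℝ), K < M → E ⊆ fracGrid M → 0 < D →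
      ∑ k ∈ Icc 1 K, truncDivisorCount Q k * ‖expSum E k‖ ^ 2
        ≤ D * (M * #E) + C * K * (Q : ℝ) ^ ε / D ^ B * (#E : ℝ) ^ 2 := by
  obtain ⟨C, hC, hmoment⟩ := exists_sum_truncDivisorCount_pow_le (Nat.succ_ne_zero B) hε
  refine ⟨C, hC, fun M K Q E D hK hE hD ↦ ?_⟩
  have hterm (k : ℕ) : truncDivisorCount Q k * ‖expSum E k‖ ^ 2
      ≤ D * ‖expSum E k‖ ^ 2
        + (truncDivisorCount Q k : ℝ) ^ (B + 1) * ((#E : ℝ) ^ 2 / D ^ B) := by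
    set u : ℝ := (truncDivisorCount Q k : ℝ)
    have hu : 0 ≤ u := Nat.cast_nonneg _
    rcases le_total u D with h | h
    · exact le_add_of_le_of_nonneg (by gcongr) (by positivity)
    · refine le_add_of_nonneg_of_le (by positivity) ?_
      calc u * ‖expSum E k‖ ^ 2 ≤ u * (u ^ B / D ^ B) * (#E : ℝ) ^ 2 := by
            gcongr
            · exact le_mul_of_one_le_right hu ((one_le_div (by positivity)).2 (by gcongr))
            · exact norm_expSum_le_card E k
        _ = _ := by ring
  calc ∑ k ∈ Icc 1 K, truncDivisorCount Q k * ‖expSum E k‖ ^ 2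
      ≤ D * ∑ k ∈ Icc 1 K, ‖expSum E k‖ ^ 2
          + (∑ k ∈ Icc 1 K, (truncDivisorCount Q k : ℝ) ^ (B + 1)) * ((#E : ℝ) ^ 2 / D ^ B) := by
        rw [mul_sum, sum_mul, ← sum_add_distrib]
        exact sum_le_sum fun k _ ↦ hterm k
    _ ≤ D * (M * #E) + C * K * (Q : ℝ) ^ ε * ((#E : ℝ) ^ 2 / D ^ B) := by
        gcongr
        · exact sum_Icc_norm_expSum_sq_le hK hE
        · exact hmoment Q K
    _ = _ := by ring

lemma truncDivisorCount_mono {Q Q' : ℕ} (h : Q ≤ Q') (k : ℕ) :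
    truncDivisorCount Q k ≤ truncDivisorCount Q' k :=
  card_le_card (filter_subset_filter _ (Icc_subset_Icc_right h))

lemma card_filter_le_norm_gaussWeylSum_le {N R Q : ℕ} (hR : 0 < R) (hRN : 8 * R ^ 2 ≤ N ^ 2)
    (hQ : 2 * R ^ 2 ≤ Q) (E : Finset ℝ) :
    (#{p ∈ E ×ˢ E | weylConst / R * N ≤ ‖gaussWeylSum N (p.1 - p.2)‖} : ℝ)
      ≤ 128 * R ^ 2 / N ^ 2 * (2 * R ^ 2 * (#E : ℝ) ^ 2
          + ∑ k ∈ Icc 1 (N ^ 2), truncDivisorCount Q k * ‖expSum E k‖ ^ 2) := by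
  classical
  set L := N ^ 2 / (8 * R ^ 2)
  have hL : 0 < L := Nat.div_pos hRN (by positivity)
  have hLN : 8 * R ^ 2 * L ≤ N ^ 2 := Nat.mul_div_le _ _
  have hNL : N ^ 2 ≤ 2 * (8 * R ^ 2 * L) := by
    have := Nat.lt_mul_div_succ (N ^ 2) (show 0 < 8 * R ^ 2 by positivity)
    nlinarith [show N ^ 2 < 8 * R ^ 2 * (L + 1) from this, Nat.mul_le_mul_left (8 * R ^ 2) hL]
  have hRltN : R < N := lt_of_pow_lt_pow_left₀ 2 (Nat.zero_le N) (by nlinarith [pow_pos hR 2])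
  have hN0 : (0 : ℝ) < N := Nat.cast_pos.2 (hR.trans hRltN)
  have hmajor : {p ∈ E ×ˢ E | weylConst / R * N ≤ ‖gaussWeylSum N (p.1 - p.2)‖}
      ⊆ (Icc 1 (2 * R ^ 2)).biUnion (nearPairs E L) := by
    intro p hp
    obtain ⟨hpE, hp⟩ := mem_filter.1 hp
    obtain ⟨q, hq, d, hd⟩ := exists_abs_mul_sub_le_of_le_norm_gaussWeylSum hR hRltN hp
    refine mem_biUnion.2 ⟨q, hq, mem_nearPairs.2 ⟨hpE, d, ?_⟩⟩
    have hLN' : 8 * (R : ℝ) ^ 2 * L ≤ N ^ 2 := by exact_mod_cast hLN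
    calc |q * (p.1 - p.2) - d| * (8 * L) ≤ R ^ 2 / N ^ 2 * (8 * L) := by gcongr
      _ = 8 * R ^ 2 * L / N ^ 2 := by ring
      _ ≤ 1 := (div_le_one (by positivity)).2 hLN'
  have hL8 : 8 / (L : ℝ) ≤ 128 * R ^ 2 / N ^ 2 := by
    have hNL' : (N : ℝ) ^ 2 ≤ 2 * (8 * R ^ 2 * L) := by exact_mod_cast hNL
    rw [div_le_div_iff₀ (by positivity) (by positivity)]
    linarith
  calc (#{p ∈ E ×ˢ E | weylConst / R * N ≤ ‖gaussWeylSum N (p.1 - p.2)‖} : ℝ)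
      ≤ #((Icc 1 (2 * R ^ 2)).biUnion (nearPairs E L)) := by exact_mod_cast card_le_card hmajor
    _ ≤ 8 / L * ((2 * R ^ 2 : ℕ) * (#E : ℝ) ^ 2
          + ∑ k ∈ Icc 1 (N ^ 2), truncDivisorCount (2 * R ^ 2) k * ‖expSum E k‖ ^ 2) :=
        card_biUnion_nearPairs_le hL (by nlinarith) E
    _ ≤ _ := by
        push_cast
        gcongr
        exact truncDivisorCount_mono hQ _

lemma le_div_two_pow_add_sum_dyadic {c v : ℝ} (hc : 0 ≤ c) (hv : v ≤ c) (I : ℕ) :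
    v ≤ c / 2 ^ I + ∑ i ∈ range I, if c / 2 ^ (i + 1) ≤ v then c / 2 ^ i else 0 := by
  induction I with
  | zero => simpa using hv
  | succ I ih =>
    have hnonneg : 0 ≤ ∑ i ∈ range I, if c / 2 ^ (i + 1) ≤ v then c / 2 ^ i else 0 :=
      sum_nonneg fun i _ ↦ by split_ifs <;> positivity
    rw [sum_range_succ]
    split_ifs with h
    · have : 0 ≤ c / 2 ^ (I + 1) := by positivity
      linarith
    · linarith [not_le.1 h]

lemma sum_le_card_mul_add_sum_dyadic {ι : Type*} (s : Finset ι) {c : ℝ} (hc : 0 ≤ c) {v : ι → ℝ}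
    (hv : ∀ p, v p ≤ c) (I : ℕ) :
    ∑ p ∈ s, v p
      ≤ #s * (c / 2 ^ I) + ∑ i ∈ range I, #{p ∈ s | c / 2 ^ (i + 1) ≤ v p} * (c / 2 ^ i) := by
  refine (sum_le_sum fun p _ ↦ le_div_two_pow_add_sum_dyadic hc (hv p) I).trans_eq ?_
  rw [sum_add_distrib, sum_comm]
  simp only [← sum_filter, sum_const, nsmul_eq_mul]

lemma card_filter_dyadic_le_norm_gaussWeylSum_mul_le {N I i : ℕ} (hI : 8 * (2 ^ I) ^ 2 ≤ N ^ 2)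
    (hi : i < I) (E : Finset ℝ) :
    #{p ∈ E ×ˢ E | weylConst / 2 ^ (i + 1) ≤ ‖gaussWeylSum N (p.1 - p.2)‖ / N}
        * (weylConst / 2 ^ i)
      ≤ 2 ^ i * (512 * weylConst / N ^ 2 * (2 * (2 ^ I) ^ 2 * (#E : ℝ) ^ 2
          + ∑ k ∈ Icc 1 (N ^ 2), truncDivisorCount (2 * (2 ^ I) ^ 2) k * ‖expSum E k‖ ^ 2)) := by
  have hW := one_le_weylConst
  have hN : (0 : ℝ) < N := Nat.cast_pos.2 (Nat.pos_of_ne_zero (by rintro rfl; simp at hI))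
  set S := ∑ k ∈ Icc 1 (N ^ 2), truncDivisorCount (2 * (2 ^ I) ^ 2) k * ‖expSum E k‖ ^ 2
  have hle : 2 ^ (i + 1) ≤ 2 ^ I := Nat.pow_le_pow_right two_pos hi
  have hle' : (2 : ℝ) ^ (i + 1) ≤ 2 ^ I := by exact_mod_cast hle
  have h := card_filter_le_norm_gaussWeylSum_le (E := E) (N := N) (R := 2 ^ (i + 1))
    (Q := 2 * (2 ^ I) ^ 2) (by positivity) (le_trans (by gcongr) hI) (by gcongr)
  push_cast at h
  simp only [le_div_iff₀ hN]
  calc _ ≤ 128 * (2 ^ (i + 1)) ^ 2 / N ^ 2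
          * (2 * (2 ^ I) ^ 2 * (#E : ℝ) ^ 2 + S) * (weylConst / 2 ^ i) := by
        gcongr
        exact h.trans (by gcongr)
    _ = _ := by rw [pow_succ]; field_simp; ring

lemma sum_norm_gaussWeylSum_le {N I : ℕ} (hI : 8 * (2 ^ I) ^ 2 ≤ N ^ 2) (E : Finset ℝ) :
    ∑ α ∈ E, ∑ β ∈ E, ‖gaussWeylSum N (α - β)‖
      ≤ N * (weylConst / 2 ^ I * (#E : ℝ) ^ 2
          + 512 * weylConst * 2 ^ I / N ^ 2 * (2 * (2 ^ I) ^ 2 * (#E : ℝ) ^ 2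
            + ∑ k ∈ Icc 1 (N ^ 2),
                truncDivisorCount (2 * (2 ^ I) ^ 2) k * ‖expSum E k‖ ^ 2)) := by
  have hW := one_le_weylConst
  have hN : 0 < N := Nat.pos_of_ne_zero (by rintro rfl; simp at hI)
  have hN0 : (0 : ℝ) < N := Nat.cast_pos.2 hN
  set S := ∑ k ∈ Icc 1 (N ^ 2), truncDivisorCount (2 * (2 ^ I) ^ 2) k * ‖expSum E k‖ ^ 2
  have hgeom : ∑ i ∈ range I, (2 : ℝ) ^ i ≤ 2 ^ I := by
    rw [geom_sum_eq (by norm_num)]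
    norm_num
  rw [← sum_product', ← div_le_iff₀' hN0, sum_div]
  calc ∑ p ∈ E ×ˢ E, ‖gaussWeylSum N (p.1 - p.2)‖ / N
      ≤ #(E ×ˢ E) * (weylConst / 2 ^ I) + ∑ i ∈ range I,
          #{p ∈ E ×ˢ E | weylConst / 2 ^ (i + 1) ≤ ‖gaussWeylSum N (p.1 - p.2)‖ / N}
            * (weylConst / 2 ^ i) :=
        sum_le_card_mul_add_sum_dyadic _ (by linarith)
          (fun p ↦ (div_le_iff₀ hN0).2 (norm_gaussWeylSum_le hN _)) I
    _ ≤ #(E ×ˢ E) * (weylConst / 2 ^ I) + (∑ i ∈ range I, (2 : ℝ) ^ i)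
          * (512 * weylConst / N ^ 2 * (2 * (2 ^ I) ^ 2 * (#E : ℝ) ^ 2 + S)) := by
        rw [sum_mul]
        exact add_le_add le_rfl (sum_le_sum fun i hi ↦
          card_filter_dyadic_le_norm_gaussWeylSum_mul_le hI (mem_range.1 hi) E)
    _ ≤ #(E ×ˢ E) * (weylConst / 2 ^ I) + 2 ^ I
          * (512 * weylConst / N ^ 2 * (2 * (2 ^ I) ^ 2 * (#E : ℝ) ^ 2 + S)) := by gcongr
    _ = _ := by
        rw [card_product]
        push_cast
        ring

lemma mul_sq_card_le_sum_norm_gaussWeylSum {N : ℕ} (hN : 0 < N) {g : ℤ → ℂ}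
    (hg : ∑ x ∈ Icc (-(N : ℤ)) N, ‖g x‖ ^ 2 ≤ 1) {E : Finset ℝ} {δ : ℝ} (hδ : 0 ≤ δ)
    (hE : ∀ α ∈ E, δ * √N ≤ ‖squareExpSum N g α‖) :
    N * (δ ^ 2 * (#E : ℝ) ^ 2)
      ≤ Real.exp Real.pi * ∑ α ∈ E, ∑ β ∈ E, ‖gaussWeylSum N (α - β)‖ := by
  calc N * (δ ^ 2 * (#E : ℝ) ^ 2) = (#E • (δ * √N)) ^ 2 := by
        rw [nsmul_eq_mul, mul_pow, mul_pow, Real.sq_sqrt (Nat.cast_nonneg N)]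
        ring
    _ ≤ (∑ α ∈ E, ‖squareExpSum N g α‖) ^ 2 := by
        have := card_nsmul_le_sum E _ _ hE
        gcongr
    _ ≤ _ := sq_sum_norm_squareExpSum_le hN g E
    _ ≤ _ := mul_le_of_le_one_left (by positivity) hg

/-- Here `n = N`, `e = #E`, `X = M`, `T = 2 ^ I` and `η = δ ^ 2`; all terms on the right of `h`
except the one with `D` are at most `η / 4 * e ^ 2`. -/
lemma mul_mul_sq_le_of_absorb {A T n e X D η b S : ℝ} (hn : 0 < n) (he : 0 ≤ e)
    (hA : 0 ≤ A) (hT : 0 < T) (hX : 0 ≤ X) (hD : 0 ≤ D)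
    (h : η * e ^ 2 ≤ A * (e ^ 2 / T + 512 * T / n ^ 2 * (2 * T ^ 2 * e ^ 2 + S)))
    (hS : S ≤ D * (X * e) + b * n ^ 2 * e ^ 2) (hT1 : 4 * A ≤ η * T)
    (hT3 : 4096 * A * T ^ 3 ≤ η * n ^ 2) (hb : 2048 * A * T * b ≤ η) :
    η * e * n ^ 2 ≤ 2048 * A * T * D * X := by
  have hdiag : A * (e ^ 2 / T) ≤ η / 4 * e ^ 2 := by
    rw [mul_div_assoc', div_le_iff₀ hT]
    nlinarith [sq_nonneg e]
  have hsmall : A * (512 * T / n ^ 2 * (2 * T ^ 2 * e ^ 2)) ≤ η / 4 * e ^ 2 := by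
    rw [div_mul_eq_mul_div, mul_div_assoc', div_le_iff₀ (by positivity)]
    nlinarith [sq_nonneg e]
  have hmoment : A * (512 * T / n ^ 2 * (b * n ^ 2 * e ^ 2)) ≤ η / 4 * e ^ 2 := by
    rw [show A * (512 * T / n ^ 2 * (b * n ^ 2 * e ^ 2)) = 512 * A * T * b * e ^ 2 by field_simp]
    nlinarith [sq_nonneg e]
  have hS' : A * (512 * T / n ^ 2 * S)
      ≤ A * (512 * T / n ^ 2 * (D * (X * e) + b * n ^ 2 * e ^ 2)) := by gcongr
  have hmain : η * e ^ 2 ≤ 4 * (A * (512 * T / n ^ 2 * (D * (X * e)))) := by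
    simp only [mul_add] at h hS'
    linarith
  rcases he.eq_or_lt with rfl | he
  · rw [mul_zero, zero_mul]
    positivity
  · refine le_of_mul_le_mul_right ?_ he
    calc η * e * n ^ 2 * e = η * e ^ 2 * n ^ 2 := by ring
      _ ≤ 4 * (A * (512 * T / n ^ 2 * (D * (X * e)))) * n ^ 2 := by gcongr
      _ = 2048 * A * T * D * X * e := by field_simp; ring

lemma exists_sq_mul_card_mul_sq_le : ∃ C : ℝ, 1 ≤ C ∧
    ∀ (N M I : ℕ) (g : ℤ → ℂ) (E : Finset ℝ) (δ D : ℝ), N ^ 2 < M →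
      ∑ x ∈ Icc (-(N : ℤ)) N, ‖g x‖ ^ 2 ≤ 1 → E ⊆ fracGrid M → 8 * (2 ^ I) ^ 2 ≤ N ^ 2 →
      0 ≤ δ → (∀ α ∈ E, δ * √N ≤ ‖squareExpSum N g α‖) → 0 < D →
      4 * (Real.exp Real.pi * weylConst) ≤ δ ^ 2 * 2 ^ I →
      4096 * (Real.exp Real.pi * weylConst) * (2 ^ I) ^ 3 ≤ δ ^ 2 * (N : ℝ) ^ 2 →
      2048 * (Real.exp Real.pi * weylConst) * 2 ^ I
        * (C * (2 * (2 ^ I) ^ 2 : ℝ) ^ (1 / 8 : ℝ) / D ^ 9) ≤ δ ^ 2 →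
      δ ^ 2 * #E * (N : ℝ) ^ 2 ≤ 2048 * (Real.exp Real.pi * weylConst) * 2 ^ I * D * M := by
  obtain ⟨C, hC, hbessel⟩ :=
    exists_sum_truncDivisorCount_mul_norm_expSum_sq_le 9 (show (0 : ℝ) < 1 / 8 by norm_num)
  refine ⟨C, hC, fun N M I g E δ D hNM hg hE hIN hδ hlevel hD hT1 hT3 hb ↦ ?_⟩
  have hN : 0 < N := Nat.pos_of_ne_zero (by rintro rfl; simp at hIN)
  have hN0 : (0 : ℝ) < N := Nat.cast_pos.2 hN
  have hW := one_le_weylConst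
  refine mul_mul_sq_le_of_absorb hN0 (Nat.cast_nonneg _) (by positivity) (by positivity)
    (Nat.cast_nonneg M) hD.le ?_ ((hbessel M (N ^ 2) (2 * (2 ^ I) ^ 2) E D hNM hE hD).trans_eq ?_)
    hT1 hT3 hb
  · refine le_of_mul_le_mul_left ?_ hN0
    calc N * (δ ^ 2 * (#E : ℝ) ^ 2)
        ≤ Real.exp Real.pi * ∑ α ∈ E, ∑ β ∈ E, ‖gaussWeylSum N (α - β)‖ :=
          mul_sq_card_le_sum_norm_gaussWeylSum hN hg hδ hlevel
      _ ≤ _ := mul_le_mul_of_nonneg_left (sum_norm_gaussWeylSum_le hIN E) (Real.exp_pos _).le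
      _ = _ := by ring
  · push_cast
    ring

lemma rpow_two_mul_sq_mul_pow_four_le {b t : ℝ} (hb : 1 ≤ b) (ht : 0 ≤ t) :
    (2 * (b * t ^ 4) ^ 2) ^ (1 / 8 : ℝ) ≤ 2 * b * t := by
  have hle : 2 * (b * t ^ 4) ^ 2 ≤ (2 * b * t) ^ 8 := by
    have : b ^ 2 ≤ b ^ 8 := pow_le_pow_right₀ hb (by norm_num)
    calc 2 * (b * t ^ 4) ^ 2 = 2 * b ^ 2 * t ^ 8 := by ring
      _ ≤ 256 * b ^ 8 * t ^ 8 := by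
          gcongr
          norm_num
      _ = _ := by ring
  calc (2 * (b * t ^ 4) ^ 2) ^ (1 / 8 : ℝ) ≤ ((2 * b * t) ^ 8) ^ (1 / 8 : ℝ) := by gcongr
    _ = 2 * b * t := by
        simpa using Real.pow_rpow_inv_natCast (n := 8) (show 0 ≤ 2 * b * t by positivity)
          (by norm_num)

lemma one_le_mul_sq_mul {A b C : ℝ} (hA : 1 ≤ A) (hb : 1 ≤ b) (hC : 1 ≤ C) :
    1 ≤ 4096 * A * b ^ 2 * C := by
  have := one_le_mul_of_one_le_of_one_le
    (one_le_mul_of_one_le_of_one_le hA (one_le_pow₀ hb (n := 2))) hC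
  linarith

lemma mul_moment_error_le {A b C t : ℝ} (hA : 1 ≤ A) (hb : 1 ≤ b) (hC : 1 ≤ C) (ht : 0 < t) :
    2048 * A * (b * t ^ 4)
      * (C * (2 * (b * t ^ 4) ^ 2) ^ (1 / 8 : ℝ) / (4096 * A * b ^ 2 * C * t) ^ 9) ≤ 1 / t ^ 4 := by
  have hb8 := rpow_two_mul_sq_mul_pow_four_le hb ht.le
  have hD := one_le_mul_sq_mul hA hb hC
  calc 2048 * A * (b * t ^ 4)
        * (C * (2 * (b * t ^ 4) ^ 2) ^ (1 / 8 : ℝ) / (4096 * A * b ^ 2 * C * t) ^ 9)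
      ≤ 2048 * A * (b * t ^ 4) * (C * (2 * b * t) / (4096 * A * b ^ 2 * C * t) ^ 9) := by gcongr
    _ = 4096 * A * b ^ 2 * C / (4096 * A * b ^ 2 * C) ^ 9 * (1 / t ^ 4) := by
        rw [mul_pow _ t, mul_div_assoc', div_mul_div_comm, div_eq_div_iff (by positivity)
          (by positivity)]
        ring
    _ ≤ 1 / t ^ 4 := by
        refine mul_le_of_le_one_left (by positivity) ((div_le_one (by positivity)).2 ?_)
        exact le_self_pow₀ hD (by norm_num)

lemma mul_pow_sixteen_le_sq {a t n : ℝ} (ha : 1 ≤ a) (h : a * t ^ 8 ≤ n) :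
    a * t ^ 16 ≤ n ^ 2 := by
  calc a * t ^ 16 ≤ a ^ 2 * t ^ 16 := by
        gcongr
        exact le_self_pow₀ ha two_ne_zero
    _ = (a * t ^ 8) ^ 2 := by ring
    _ ≤ n ^ 2 := by gcongr

/-- Take `δ = 4⁻ᵐ` and, with `t = 2 ^ m`, arcs of height `2 ^ I = b t ^ 4` and the divisor threshold
`D t`: this power of `t` beats the error `(t ^ 8) ^ (1 / 8)` of the ninth divisor moment. -/
lemma exists_card_levelSet_mul_sq_le_of_large : ∃ C : ℝ, 1 ≤ C ∧
    ∀ (m N M : ℕ) (g : ℤ → ℂ) (E : Finset ℝ), N ^ 2 < M →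
      ∑ x ∈ Icc (-(N : ℤ)) N, ‖g x‖ ^ 2 ≤ 1 → E ⊆ fracGrid M →
      (∀ α ∈ E, 1 / 4 ^ m * √N ≤ ‖squareExpSum N g α‖) → C * (2 ^ m) ^ 8 ≤ N →
      #E * (N : ℝ) ^ 2 ≤ C * (2 ^ m) ^ 9 * M := by
  obtain ⟨C, hC, hlarge⟩ := exists_sq_mul_card_mul_sq_le
  set A := Real.exp Real.pi * weylConst
  have hA : 1 ≤ A :=
    one_le_mul_of_one_le_of_one_le (Real.one_le_exp Real.pi_pos.le) one_le_weylConst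
  obtain ⟨a, ha⟩ := pow_unbounded_of_one_lt (4 * A) one_lt_two
  set b : ℝ := 2 ^ a
  have hb : 1 ≤ b := one_le_pow₀ one_le_two
  have hD := one_le_mul_sq_mul hA hb hC
  set D : ℝ := 4096 * A * b ^ 2 * C
  have hC' : 4096 * A * b ^ 3 ≤ 4096 * A * b ^ 3 * D := le_mul_of_one_le_right (by positivity) hD
  have hC1 : 1 ≤ 4096 * A * b ^ 3 * D := by nlinarith [one_le_pow₀ hb (n := 3)]
  refine ⟨4096 * A * b ^ 3 * D, hC1, fun m N M g E hNM hg hE hlevel hN ↦ ?_⟩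
  set t : ℝ := 2 ^ m
  have ht : 1 ≤ t := one_le_pow₀ one_le_two
  have hδ : (1 / 4 ^ m : ℝ) ^ 2 = 1 / t ^ 4 := by
    rw [show (4 : ℝ) ^ m = t ^ 2 by rw [← pow_mul, mul_comm, pow_mul]; norm_num]
    ring
  have hT : (2 : ℝ) ^ (4 * m + a) = b * t ^ 4 := by
    rw [pow_add, mul_comm 4 m, pow_mul, mul_comm]
  have hN2 : 4096 * A * b ^ 3 * t ^ 16 ≤ (N : ℝ) ^ 2 :=
    (mul_le_mul_of_nonneg_right hC' (by positivity)).trans (mul_pow_sixteen_le_sq hC1 hN)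
  have hIN : (8 * (2 ^ (4 * m + a)) ^ 2 : ℝ) ≤ N ^ 2 := by
    rw [hT]
    calc 8 * (b * t ^ 4) ^ 2 = 8 * 1 * b ^ 2 * t ^ 8 := by ring
      _ ≤ 4096 * A * b ^ 3 * t ^ 16 := by gcongr <;> norm_num
      _ ≤ N ^ 2 := hN2
  have h := hlarge N M (4 * m + a) g E (1 / 4 ^ m) (D * t) hNM hg hE (by exact_mod_cast hIN)
    (by positivity) hlevel (by positivity)
  rw [hδ, hT, one_div_mul_eq_div, one_div_mul_eq_div, one_div_mul_eq_div, div_mul_eq_mul_div,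
    div_le_iff₀ (by positivity), le_div_iff₀ (by positivity), le_div_iff₀ (by positivity)] at h
  calc #E * (N : ℝ) ^ 2 ≤ 2048 * A * (b * t ^ 4) * (D * t) * M * t ^ 4 := by
        refine h (by nlinarith [pow_pos (zero_lt_one.trans_le ht) 4])
          ((by ring : _ = 4096 * A * b ^ 3 * t ^ 16).trans_le hN2)
          (mul_moment_error_le hA hb hC (by positivity))
    _ = 2048 * A * b * D * t ^ 9 * M := by ring
    _ ≤ 4096 * A * b ^ 3 * D * t ^ 9 * M := by
        gcongr
        · norm_num
        · exact le_self_pow₀ hb (by norm_num)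

end LargeLevelSets

section FourthMoment

open scoped FourierTransform ComplexConjugate

/-- The representations of `k` as a difference of the squares of two integers in `[-N, N]`. -/
def sqSubSqPairs (N : ℕ) (k : ℤ) : Finset (ℤ × ℤ) :=
  {p ∈ Icc (-(N : ℤ)) N ×ˢ Icc (-(N : ℤ)) N | p.1 ^ 2 - p.2 ^ 2 = k}

/-- The `k`-th Fourier coefficient of `‖squareExpSum N g ·‖ ^ 2`. -/
def sqSubSqCoeff (N : ℕ) (g : ℤ → ℂ) (k : ℤ) : ℂ :=
  ∑ p ∈ sqSubSqPairs N k, g p.1 * conj (g p.2)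

lemma card_sqSubSqPairs_le (N : ℕ) {k : ℤ} (hk : k ≠ 0) :
    #(sqSubSqPairs N k) ≤ 2 * #k.natAbs.divisors := by
  have hcard : 2 * #k.natAbs.divisors = #((univ : Finset Bool) ×ˢ k.natAbs.divisors) := by
    rw [card_product, card_univ, Fintype.card_bool]
  -- A pair `(x, y)` is recovered from `k = (x - y) * (x + y)` and the signed divisor `x - y`.
  rw [hcard]
  refine card_le_card_of_injOn (fun p ↦ (decide (0 < p.1 - p.2), (p.1 - p.2).natAbs)) ?_ ?_
  · intro p hp
    have hpk := (mem_filter.1 (mem_coe.1 hp)).2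
    refine mem_coe.2 (mem_product.2 ⟨mem_univ _, Nat.mem_divisors.2 ⟨?_, Int.natAbs_ne_zero.2 hk⟩⟩)
    exact Int.natAbs_dvd_natAbs.2 ⟨p.1 + p.2, by rw [← hpk]; ring⟩
  · intro p hp p' hp' h
    have hpk := (mem_filter.1 (mem_coe.1 hp)).2
    have hpk' := (mem_filter.1 (mem_coe.1 hp')).2
    obtain ⟨hsign, habs⟩ := Prod.mk.inj h
    have hsub : p.1 - p.2 = p'.1 - p'.2 := by
      have := decide_eq_decide.1 hsign
      omega
    have hsub0 : p.1 - p.2 ≠ 0 := by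
      intro h0
      rw [sq_sub_sq, h0, mul_zero] at hpk
      exact hk hpk.symm
    have hadd : p.1 + p.2 = p'.1 + p'.2 :=
      mul_right_cancel₀ hsub0 (by rw [← sq_sub_sq, hpk, hsub, ← sq_sub_sq, hpk'])
    ext <;> omega

lemma sq_sub_sq_mem_Icc {N : ℕ} {p : ℤ × ℤ} (hp : p ∈ Icc (-(N : ℤ)) N ×ˢ Icc (-(N : ℤ)) N) :
    p.1 ^ 2 - p.2 ^ 2 ∈ Icc (-(N : ℤ) ^ 2) (N ^ 2) := by
  have hsq {x : ℤ} (hx : x ∈ Icc (-(N : ℤ)) N) : x ^ 2 ≤ (N : ℤ) ^ 2 :=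
    sq_le_sq' (mem_Icc.1 hx).1 (mem_Icc.1 hx).2
  obtain ⟨hp₁, hp₂⟩ := mem_product.1 hp
  rw [mem_Icc, ← abs_le]
  exact abs_sub_le_of_nonneg_of_le (sq_nonneg _) (hsq hp₁) (sq_nonneg _) (hsq hp₂)

lemma norm_squareExpSum_sq (N : ℕ) (g : ℤ → ℂ) (α : ℝ) :
    ((‖squareExpSum N g α‖ ^ 2 : ℝ) : ℂ)
      = ∑ k ∈ Icc (-(N : ℤ) ^ 2) (N ^ 2), sqSubSqCoeff N g k * 𝐞 (k * α) := by
  rw [squareExpSum, norm_sum_mul_fourierChar_sq, ← sum_product',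
    ← sum_fiberwise_of_maps_to fun p ↦ sq_sub_sq_mem_Icc]
  refine sum_congr rfl fun k _ ↦ ?_
  rw [sqSubSqCoeff, sum_mul]
  refine sum_congr rfl fun p hp ↦ ?_
  rw [← (mem_filter.1 hp).2]
  push_cast
  ring_nf

lemma sum_fracGrid_norm_squareExpSum_pow_four {N M : ℕ} (hM : 2 * N ^ 2 < M) (g : ℤ → ℂ) :
    ∑ α ∈ fracGrid M, ‖squareExpSum N g α‖ ^ 4
      = M * ∑ k ∈ Icc (-(N : ℤ) ^ 2) (N ^ 2), ‖sqSubSqCoeff N g k‖ ^ 2 := by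
  have hK : ∀ k ∈ Icc (-(N : ℤ) ^ 2) (N ^ 2), ∀ l ∈ Icc (-(N : ℤ) ^ 2) (N ^ 2),
      (M : ℤ) ∣ k - l → k = l := by
    intro k hk l hl hkl
    rw [mem_Icc] at hk hl
    refine sub_eq_zero.1 (Int.eq_zero_of_abs_lt_dvd hkl ?_)
    have : 2 * (N : ℤ) ^ 2 < M := by exact_mod_cast hM
    exact abs_lt.2 ⟨by linarith, by linarith⟩
  rw [← sum_fracGrid_norm_sum_mul_fourierChar_sq (by omega) hK]
  refine sum_congr rfl fun α _ ↦ ?_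
  rw [← norm_squareExpSum_sq, Complex.norm_real, norm_pow, norm_norm]
  ring

lemma sum_sum_sqSubSqPairs (N : ℕ) (u : ℤ → ℝ) :
    ∑ k ∈ Icc (-(N : ℤ) ^ 2) (N ^ 2), ∑ p ∈ sqSubSqPairs N k, u p.1 * u p.2
      = (∑ x ∈ Icc (-(N : ℤ)) N, u x) ^ 2 := by
  simp only [sqSubSqPairs]
  rw [sum_fiberwise_of_maps_to fun p ↦ sq_sub_sq_mem_Icc, sum_product, sq, sum_mul_sum]

lemma norm_sqSubSqCoeff_sq_le (N : ℕ) (g : ℤ → ℂ) (k : ℤ) :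
    ‖sqSubSqCoeff N g k‖ ^ 2
      ≤ #(sqSubSqPairs N k) * ∑ p ∈ sqSubSqPairs N k, ‖g p.1‖ ^ 2 * ‖g p.2‖ ^ 2 := by
  calc ‖sqSubSqCoeff N g k‖ ^ 2
      ≤ (∑ p ∈ sqSubSqPairs N k, ‖g p.1‖ * ‖g p.2‖) ^ 2 := by
        refine pow_le_pow_left₀ (norm_nonneg _) ((norm_sum_le _ _).trans_eq ?_) 2
        simp only [norm_mul, RCLike.norm_conj]
    _ ≤ _ := by
        simp only [← mul_pow]
        exact sq_sum_le_card_mul_sum_sq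

lemma sum_sqSubSqPairs_zero_fst_le (N : ℕ) {u : ℤ → ℝ} (hu : 0 ≤ u) :
    ∑ p ∈ sqSubSqPairs N 0, u p.1 ≤ 2 * ∑ x ∈ Icc (-(N : ℤ)) N, u x := by
  have hcard (x : ℤ) : (#{y ∈ Icc (-(N : ℤ)) N | x ^ 2 - y ^ 2 = 0} : ℝ) ≤ 2 := by
    have hsub : {y ∈ Icc (-(N : ℤ)) N | x ^ 2 - y ^ 2 = 0} ⊆ {x, -x} := by
      intro y hy
      have := sq_eq_sq_iff_eq_or_eq_neg.1 (sub_eq_zero.1 (mem_filter.1 hy).2)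
      rw [mem_insert, mem_singleton]
      omega
    exact_mod_cast (card_le_card hsub).trans card_le_two
  rw [sqSubSqPairs, sum_filter, sum_product, mul_sum]
  refine sum_le_sum fun x _ ↦ ?_
  simp only [← sum_filter, sum_const, nsmul_eq_mul]
  exact mul_le_mul_of_nonneg_right (hcard x) (hu x)

lemma norm_sqSubSqCoeff_zero_le (N : ℕ) (g : ℤ → ℂ) :
    ‖sqSubSqCoeff N g 0‖ ≤ 2 * ∑ x ∈ Icc (-(N : ℤ)) N, ‖g x‖ ^ 2 := by
  have hfst := sum_sqSubSqPairs_zero_fst_le N (u := fun x ↦ ‖g x‖ ^ 2) fun _ ↦ sq_nonneg _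
  have hswap : ∑ p ∈ sqSubSqPairs N 0, ‖g p.2‖ ^ 2 = ∑ p ∈ sqSubSqPairs N 0, ‖g p.1‖ ^ 2 := by
    refine sum_equiv (Equiv.prodComm ℤ ℤ) (fun p ↦ ?_) fun p _ ↦ rfl
    simp only [sqSubSqPairs, mem_filter, mem_product, Equiv.prodComm_apply, Prod.fst_swap,
      Prod.snd_swap, sub_eq_zero, and_comm (a := p.1 ∈ _), eq_comm (a := p.1 ^ 2)]
  calc ‖sqSubSqCoeff N g 0‖
      ≤ ∑ p ∈ sqSubSqPairs N 0, (‖g p.1‖ ^ 2 + ‖g p.2‖ ^ 2) / 2 := by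
        refine (norm_sum_le _ _).trans (sum_le_sum fun p _ ↦ ?_)
        rw [norm_mul, RCLike.norm_conj]
        linarith [two_mul_le_add_sq ‖g p.1‖ ‖g p.2‖]
    _ = ∑ p ∈ sqSubSqPairs N 0, ‖g p.1‖ ^ 2 := by
        rw [← sum_div, sum_add_distrib, hswap, add_self_div_two]
    _ ≤ _ := hfst

lemma exists_card_sqSubSqPairs_le_rpow {ε : ℝ} (hε : 0 < ε) : ∃ C : ℝ, 1 ≤ C ∧
    ∀ (N : ℕ), ∀ k ∈ Icc (-(N : ℤ) ^ 2) (N ^ 2), k ≠ 0 →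
      (#(sqSubSqPairs N k) : ℝ) ≤ C * (N : ℝ) ^ ε := by
  obtain ⟨C, hC, hdiv⟩ := exists_card_divisors_le_rpow (half_pos hε)
  refine ⟨2 * C, by linarith, fun N k hk hk0 ↦ ?_⟩
  have hkN : (k.natAbs : ℝ) ≤ (N : ℝ) ^ 2 := by
    rw [Nat.cast_natAbs]
    exact_mod_cast abs_le.2 (mem_Icc.1 hk)
  calc (#(sqSubSqPairs N k) : ℝ) ≤ 2 * #k.natAbs.divisors := by
        exact_mod_cast card_sqSubSqPairs_le N hk0
    _ ≤ 2 * (C * (k.natAbs : ℝ) ^ (ε / 2)) := by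
        gcongr
        exact hdiv _ (Int.natAbs_ne_zero.2 hk0)
    _ ≤ 2 * (C * ((N : ℝ) ^ 2) ^ (ε / 2)) := by gcongr
    _ = 2 * C * (N : ℝ) ^ ε := by
        rw [← Real.rpow_natCast_mul (Nat.cast_nonneg N), Nat.cast_two,
          mul_div_cancel₀ ε two_ne_zero]
        ring

lemma exists_sum_fracGrid_norm_squareExpSum_pow_four_le {ε : ℝ} (hε : 0 < ε) : ∃ C : ℝ, 1 ≤ C ∧
    ∀ (N M : ℕ) (g : ℤ → ℂ), 1 ≤ N → 2 * N ^ 2 < M → ∑ x ∈ Icc (-(N : ℤ)) N, ‖g x‖ ^ 2 ≤ 1 →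
      ∑ α ∈ fracGrid M, ‖squareExpSum N g α‖ ^ 4 ≤ C * (N : ℝ) ^ ε * M := by
  obtain ⟨C, hC, hcard⟩ := exists_card_sqSubSqPairs_le_rpow hε
  refine ⟨C + 4, by linarith, fun N M g hN hM hg ↦ ?_⟩
  have hNε : 1 ≤ (N : ℝ) ^ ε := Real.one_le_rpow (Nat.one_le_cast.2 hN) hε.le
  set m : ℤ → ℝ := fun k ↦ ∑ p ∈ sqSubSqPairs N k, ‖g p.1‖ ^ 2 * ‖g p.2‖ ^ 2
  have hm0 (k : ℤ) : 0 ≤ m k := sum_nonneg fun _ _ ↦ by positivity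
  have hcoeff : ∀ k ∈ Icc (-(N : ℤ) ^ 2) (N ^ 2),
      ‖sqSubSqCoeff N g k‖ ^ 2 ≤ C * (N : ℝ) ^ ε * m k + if k = 0 then 4 else 0 := by
    intro k hk
    have hmain : 0 ≤ C * (N : ℝ) ^ ε * m k := by
      have := hm0 k
      positivity
    split_ifs with hk0
    · have hzero : ‖sqSubSqCoeff N g 0‖ ≤ 2 := (norm_sqSubSqCoeff_zero_le N g).trans (by linarith)
      rw [hk0] at hmain ⊢
      nlinarith [norm_nonneg (sqSubSqCoeff N g 0)]
    · rw [add_zero]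
      exact (norm_sqSubSqCoeff_sq_le N g k).trans
        (mul_le_mul_of_nonneg_right (hcard N k hk hk0) (hm0 k))
  have hmass : ∑ k ∈ Icc (-(N : ℤ) ^ 2) (N ^ 2), m k ≤ 1 := by
    rw [sum_sum_sqSubSqPairs N fun x ↦ ‖g x‖ ^ 2]
    exact pow_le_one₀ (sum_nonneg fun _ _ ↦ sq_nonneg _) hg
  rw [sum_fracGrid_norm_squareExpSum_pow_four hM, mul_comm]
  gcongr
  calc ∑ k ∈ Icc (-(N : ℤ) ^ 2) (N ^ 2), ‖sqSubSqCoeff N g k‖ ^ 2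
      ≤ C * (N : ℝ) ^ ε * ∑ k ∈ Icc (-(N : ℤ) ^ 2) (N ^ 2), m k + 4 := by
        refine (sum_le_sum hcoeff).trans ?_
        rw [sum_add_distrib, ← mul_sum, sum_ite_eq']
        split_ifs <;> linarith
    _ ≤ C * (N : ℝ) ^ ε * 1 + 4 * (N : ℝ) ^ ε := by
        gcongr
        linarith
    _ = (C + 4) * (N : ℝ) ^ ε := by ring

end FourthMoment

section LevelSets

lemma exists_card_levelSet_mul_sq_le : ∃ C : ℝ, 1 ≤ C ∧
    ∀ (m N M : ℕ) (g : ℤ → ℂ) (E : Finset ℝ), 1 ≤ N → 2 * N ^ 2 < M →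
      ∑ x ∈ Icc (-(N : ℤ)) N, ‖g x‖ ^ 2 ≤ 1 → E ⊆ fracGrid M →
      (∀ α ∈ E, 1 / 4 ^ m * √N ≤ ‖squareExpSum N g α‖) →
      #E * (N : ℝ) ^ 2 ≤ C * (2 ^ m) ^ 9 * M := by
  obtain ⟨C₁, hC₁, hlarge⟩ := exists_card_levelSet_mul_sq_le_of_large
  obtain ⟨C₂, hC₂, hfourth⟩ :=
    exists_sum_fracGrid_norm_squareExpSum_pow_four_le (show (0 : ℝ) < 1 / 8 by norm_num)
  refine ⟨C₁ * C₂, one_le_mul_of_one_le_of_one_le hC₁ hC₂, fun m N M g E hN hM hg hE hlevel ↦ ?_⟩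
  set t : ℝ := 2 ^ m
  have : 0 < t := by positivity
  have hN0 : (0 : ℝ) < N := Nat.cast_pos.2 hN
  rcases le_or_gt (C₁ * t ^ 8) N with hbig | hsmall
  · refine (hlarge m N M g E (by omega) hg hE hlevel hbig).trans ?_
    gcongr
    exact le_mul_of_one_le_right (by linarith) hC₂
  have hNroot : (N : ℝ) ^ (1 / 8 : ℝ) ≤ C₁ * t := by
    have hle : (N : ℝ) ≤ (C₁ * t) ^ 8 := by
      rw [mul_pow]
      refine hsmall.le.trans ?_
      gcongr
      exact le_self_pow₀ hC₁ (by norm_num)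
    rw [one_div, Real.rpow_inv_le_iff_of_pos hN0.le (by positivity) (by norm_num)]
    exact_mod_cast hle
  have hlevel4 : (1 / 4 ^ m * √N) ^ 4 = N ^ 2 / t ^ 8 := by
    rw [show (4 : ℝ) ^ m = t ^ 2 by rw [← pow_mul, mul_comm, pow_mul]; norm_num, mul_pow,
      show √(N : ℝ) ^ 4 = (√N ^ 2) ^ 2 by ring, Real.sq_sqrt hN0.le]
    ring
  have hcard : #E * (N ^ 2 / t ^ 8) ≤ C₂ * (C₁ * t) * M := by
    calc #E * (N ^ 2 / t ^ 8) = ∑ α ∈ E, (1 / 4 ^ m * √N) ^ 4 := by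
          rw [sum_const, nsmul_eq_mul, hlevel4]
      _ ≤ ∑ α ∈ E, ‖squareExpSum N g α‖ ^ 4 := by
          gcongr with α hα
          exact hlevel α hα
      _ ≤ ∑ α ∈ fracGrid M, ‖squareExpSum N g α‖ ^ 4 := by gcongr
      _ ≤ C₂ * (N : ℝ) ^ (1 / 8 : ℝ) * M := hfourth N M g hN hM hg
      _ ≤ _ := by gcongr
  rw [mul_div_assoc', div_le_iff₀ (by positivity)] at hcard
  linarith

end LevelSets

section Moments

lemma norm_squareExpSum_le {N : ℕ} (hN : 1 ≤ N) {g : ℤ → ℂ}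
    (hg : ∑ x ∈ Icc (-(N : ℤ)) N, ‖g x‖ ^ 2 ≤ 1) (α : ℝ) :
    ‖squareExpSum N g α‖ ≤ 2 * √N := by
  have hN1 : (1 : ℝ) ≤ N := Nat.one_le_cast.2 hN
  have hcard : (#(Icc (-(N : ℤ)) N) : ℝ) ≤ 4 * N := by
    have : #(Icc (-(N : ℤ)) N) = 2 * N + 1 := by
      rw [Int.card_Icc]
      omega
    rw [this]
    push_cast
    linarith
  have htriangle : ‖squareExpSum N g α‖ ≤ ∑ x ∈ Icc (-(N : ℤ)) N, ‖g x‖ := by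
    refine (norm_sum_le _ _).trans_eq (sum_congr rfl fun x _ ↦ ?_)
    rw [norm_mul, Circle.norm_coe, mul_one]
  refine le_of_sq_le_sq ?_ (by positivity)
  calc ‖squareExpSum N g α‖ ^ 2 ≤ (∑ x ∈ Icc (-(N : ℤ)) N, ‖g x‖) ^ 2 := by gcongr
    _ ≤ #(Icc (-(N : ℤ)) N) * ∑ x ∈ Icc (-(N : ℤ)) N, ‖g x‖ ^ 2 := sq_sum_le_card_mul_sum_sq
    _ ≤ 4 * N * 1 := by gcongr
    _ = (2 * √N) ^ 2 := by
        rw [mul_pow, Real.sq_sqrt (Nat.cast_nonneg N)]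
        ring

lemma pow_five_le_add_sum_dyadic {u : ℝ} (hu₀ : 0 ≤ u) (hu : u ≤ 4) (I : ℕ) :
    u ^ 5 ≤ 1024 / 1024 ^ I
      + ∑ i ∈ range I, if 1 / 4 ^ i ≤ u then (1024 / 1024 ^ i : ℝ) else 0 := by
  induction I with
  | zero =>
    calc u ^ 5 ≤ 4 ^ 5 := by gcongr
      _ = _ := by norm_num
  | succ I ih =>
    have hnonneg :
        0 ≤ ∑ i ∈ range I, if 1 / 4 ^ i ≤ u then (1024 / 1024 ^ i : ℝ) else 0 :=
      sum_nonneg fun i _ ↦ by split_ifs <;> positivity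
    rw [sum_range_succ]
    split_ifs with h
    · have : (0 : ℝ) ≤ 1024 / 1024 ^ (I + 1) := by positivity
      linarith
    · have : u ^ 5 ≤ 1024 / 1024 ^ (I + 1) := by
        calc u ^ 5 ≤ (1 / 4 ^ I) ^ 5 := by
              gcongr
              exact (not_le.1 h).le
          _ = 1024 / 1024 ^ (I + 1) := by
              rw [show (1024 : ℝ) = 4 ^ 5 by norm_num, ← pow_mul, div_pow, ← pow_mul, one_pow,
                mul_comm I, mul_add_one, pow_add]
              field_simp
      linarith

lemma sum_pow_five_le_of_card_level_le {ι : Type*} {s : Finset ι} {u : ι → ℝ} {K : ℝ}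
    (hu₀ : ∀ a ∈ s, 0 ≤ u a) (hu : ∀ a ∈ s, u a ≤ 4)
    (hlevel : ∀ m : ℕ, (#{a ∈ s | 1 / 4 ^ m ≤ u a} : ℝ) ≤ K * (2 ^ m) ^ 9) :
    ∑ a ∈ s, u a ^ 5 ≤ 2048 * K := by
  have hK : 0 ≤ K := by simpa using (Nat.cast_nonneg _).trans (hlevel 0)
  have hgeom (I : ℕ) : ∑ i ∈ range I, (1 / 2 : ℝ) ^ i ≤ 2 := by
    rw [geom_sum_eq (by norm_num), div_le_iff_of_neg (by norm_num)]
    linarith [show (0 : ℝ) ≤ (1 / 2) ^ I by positivity]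
  have hdyadic (I : ℕ) : ∑ a ∈ s, u a ^ 5 ≤ #s * (1024 / 1024 ^ I) + 2048 * K := by
    calc ∑ a ∈ s, u a ^ 5
        ≤ #s * (1024 / 1024 ^ I)
          + ∑ i ∈ range I, (#{a ∈ s | 1 / 4 ^ i ≤ u a} : ℝ) * (1024 / 1024 ^ i) := by
          refine (sum_le_sum fun a ha ↦
            pow_five_le_add_sum_dyadic (hu₀ a ha) (hu a ha) I).trans_eq ?_
          rw [sum_add_distrib, sum_comm]
          simp only [← sum_filter, sum_const, nsmul_eq_mul]
      _ ≤ #s * (1024 / 1024 ^ I) + ∑ i ∈ range I, (1 / 2) ^ i * (1024 * K) := by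
          refine add_le_add le_rfl (sum_le_sum fun i _ ↦ ?_)
          calc (#{a ∈ s | 1 / 4 ^ i ≤ u a} : ℝ) * (1024 / 1024 ^ i)
              ≤ K * (2 ^ i) ^ 9 * (1024 / 1024 ^ i) := by
                gcongr
                exact hlevel i
            _ = (1 / 2) ^ i * (1024 * K) := by
                have : (1024 : ℝ) ^ i = (2 ^ i) ^ 10 := by
                  rw [← pow_mul, mul_comm, pow_mul]
                  norm_num
                rw [this, one_div_pow]
                field_simp
      _ ≤ _ := by
          rw [← sum_mul]
          nlinarith [hgeom I]
  refine ge_of_tendsto' (x := Filter.atTop) ?_ hdyadic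
  have hzero : Filter.Tendsto (fun I : ℕ ↦ (1024 / 1024 ^ I : ℝ)) Filter.atTop (nhds 0) :=
    tendsto_const_nhds.div_atTop (tendsto_pow_atTop_atTop_of_one_lt (by norm_num))
  simpa using (hzero.const_mul (#s : ℝ)).add_const (2048 * K)

lemma exists_sum_fracGrid_norm_squareExpSum_pow_five_le : ∃ C : ℝ, 1 ≤ C ∧
    ∀ (N M : ℕ) (g : ℤ → ℂ), 1 ≤ N → 2 * N ^ 2 < M → ∑ x ∈ Icc (-(N : ℤ)) N, ‖g x‖ ^ 2 ≤ 1 →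
      ∑ α ∈ fracGrid M, (‖squareExpSum N g α‖ / √N) ^ 5 ≤ C * M / N ^ 2 := by
  obtain ⟨C, hC, hlevel⟩ := exists_card_levelSet_mul_sq_le
  refine ⟨2048 * C, by linarith, fun N M g hN hM hg ↦ ?_⟩
  have : (0 : ℝ) < N := Nat.cast_pos.2 hN
  rw [mul_assoc, mul_div_assoc]
  refine sum_pow_five_le_of_card_level_le (fun α _ ↦ by positivity) (fun α _ ↦ ?_) fun m ↦ ?_
  · rw [div_le_iff₀ (by positivity)]
    linarith [norm_squareExpSum_le hN hg α, Real.sqrt_nonneg N]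
  · rw [div_mul_eq_mul_div, le_div_iff₀ (by positivity), mul_right_comm]
    refine hlevel m N M g _ hN hM hg (filter_subset _ _) fun α hα ↦ ?_
    exact (le_div_iff₀ (by positivity)).1 (mem_filter.1 hα).2

lemma exists_sum_fracGrid_norm_squareExpSum_pow_le {n : ℕ} (hn : 5 ≤ n) : ∃ C : ℝ, 1 ≤ C ∧
    ∀ (N M : ℕ) (g : ℤ → ℂ), 1 ≤ N → 2 * N ^ 2 < M → ∑ x ∈ Icc (-(N : ℤ)) N, ‖g x‖ ^ 2 ≤ 1 →
      ∑ α ∈ fracGrid M, (‖squareExpSum N g α‖ / √N) ^ n ≤ C * M / N ^ 2 := by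
  obtain ⟨C, hC, hfive⟩ := exists_sum_fracGrid_norm_squareExpSum_pow_five_le
  refine ⟨2 ^ (n - 5) * C, one_le_mul_of_one_le_of_one_le (one_le_pow₀ one_le_two) hC,
    fun N M g hN hM hg ↦ ?_⟩
  have : (0 : ℝ) < N := Nat.cast_pos.2 hN
  calc ∑ α ∈ fracGrid M, (‖squareExpSum N g α‖ / √N) ^ n
      ≤ ∑ α ∈ fracGrid M, 2 ^ (n - 5) * (‖squareExpSum N g α‖ / √N) ^ 5 := by
        refine sum_le_sum fun α _ ↦ ?_
        rw [← Nat.sub_add_cancel hn, pow_add, Nat.add_sub_cancel]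
        gcongr
        exact (div_le_iff₀ (by positivity)).2 (norm_squareExpSum_le hN hg α)
    _ ≤ 2 ^ (n - 5) * (C * M / N ^ 2) := by
        rw [← mul_sum]
        gcongr
        exact hfive N M g hN hM hg
    _ = _ := by ring

end Moments

section CircleMethod

open scoped FourierTransform

variable {n : ℕ}

/-- The integer points of the sphere `∑ i, x i ^ 2 = lam` in `ℤⁿ`. -/
def latticeSphere (n lam : ℕ) : Finset (Fin n → ℤ) :=
  {x ∈ Fintype.piFinset fun _ ↦ Icc (-(lam.sqrt : ℤ)) lam.sqrt | ∑ i, x i ^ 2 = (lam : ℤ)}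

lemma mem_Icc_sqrt_of_sq_le {x : ℤ} {lam : ℕ} (hx : x ^ 2 ≤ lam) :
    x ∈ Icc (-(lam.sqrt : ℤ)) lam.sqrt := by
  have : x.natAbs ≤ lam.sqrt := by
    rw [Nat.le_sqrt']
    zify
    rwa [sq_abs]
  rw [mem_Icc]
  omega

lemma mem_latticeSphere {lam : ℕ} {x : Fin n → ℤ} :
    x ∈ latticeSphere n lam ↔ ∑ i, x i ^ 2 = (lam : ℤ) := by
  refine mem_filter.trans ⟨And.right, fun hx ↦ ⟨Fintype.mem_piFinset.2 fun i ↦ ?_, hx⟩⟩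
  exact mem_Icc_sqrt_of_sq_le
    ((single_le_sum (fun j _ ↦ sq_nonneg (x j)) (mem_univ i)).trans_eq hx)

lemma prod_le_sum_pow_card {ι : Type*} [Fintype ι] [Nonempty ι] {u : ι → ℝ} (hu : ∀ i, 0 ≤ u i) :
    ∏ i, u i ≤ ∑ i, u i ^ Fintype.card ι := by
  obtain ⟨k, -, hk⟩ := exists_max_image univ u univ_nonempty
  calc ∏ i, u i ≤ ∏ _i, u k := prod_le_prod (fun i _ ↦ hu i) hk
    _ = u k ^ Fintype.card ι := by rw [prod_const, card_univ]
    _ ≤ _ := single_le_sum (f := fun i ↦ u i ^ Fintype.card ι) (fun i _ ↦ pow_nonneg (hu i) _)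
        (mem_univ k)

lemma coe_fourierChar_sum {ι : Type*} (s : Finset ι) (f : ι → ℝ) :
    (𝐞 (∑ i ∈ s, f i) : ℂ) = ∏ i ∈ s, (𝐞 (f i) : ℂ) :=
  map_prod (Circle.coeHom.comp 𝐞.toMonoidHom) (fun i ↦ Multiplicative.ofAdd (f i)) s

lemma sum_sq_eq_iff_dvd {lam M : ℕ} (hM : (n + 1) * lam < M) {x : Fin n → ℤ}
    (hx : x ∈ Fintype.piFinset fun _ : Fin n ↦ Icc (-(lam.sqrt : ℤ)) lam.sqrt) :
    (M : ℤ) ∣ ∑ i, x i ^ 2 - lam ↔ ∑ i, x i ^ 2 = (lam : ℤ) := by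
  refine ⟨fun h ↦ sub_eq_zero.1 (Int.eq_zero_of_abs_lt_dvd h ?_), fun h ↦ by simp [h]⟩
  have hxi (i : Fin n) : x i ^ 2 ≤ lam := by
    have := sq_le_sq' (mem_Icc.1 (Fintype.mem_piFinset.1 hx i)).1
      (mem_Icc.1 (Fintype.mem_piFinset.1 hx i)).2
    exact this.trans (by exact_mod_cast Nat.sqrt_le' lam)
  have hle : ∑ i, x i ^ 2 ≤ n * (lam : ℤ) := by
    simpa only [card_univ, Fintype.card_fin, nsmul_eq_mul] using
      sum_le_card_nsmul univ _ _ fun i _ ↦ hxi i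
  have : (n + 1) * (lam : ℤ) < M := by exact_mod_cast hM
  rw [abs_lt]
  constructor <;> nlinarith [sum_nonneg fun i (_ : i ∈ univ) ↦ sq_nonneg (x i)]

lemma sum_fracGrid_prod_squareExpSum {lam M : ℕ} (hM : (n + 1) * lam < M) (g : Fin n → ℤ → ℂ) :
    ∑ α ∈ fracGrid M, (∏ i, squareExpSum lam.sqrt (g i) α) * 𝐞 (-(α * lam))
      = M * ∑ x ∈ latticeSphere n lam, ∏ i, g i (x i) := by
  have hexpand (α : ℝ) : (∏ i, squareExpSum lam.sqrt (g i) α) * 𝐞 (-(α * lam))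
      = ∑ x ∈ Fintype.piFinset fun _ : Fin n ↦ Icc (-(lam.sqrt : ℤ)) lam.sqrt,
          (∏ i, g i (x i)) * 𝐞 (α * (∑ i, x i ^ 2 - lam : ℤ)) := by
    simp only [squareExpSum]
    rw [prod_univ_sum, sum_mul]
    refine sum_congr rfl fun x _ ↦ ?_
    rw [prod_mul_distrib, mul_assoc, ← coe_fourierChar_sum, ← coe_fourierChar_add]
    push_cast
    rw [mul_sub, mul_sum, sub_eq_add_neg]
  have horth : ∀ x ∈ Fintype.piFinset fun _ : Fin n ↦ Icc (-(lam.sqrt : ℤ)) lam.sqrt,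
      ∑ α ∈ fracGrid M, (𝐞 (α * (∑ i, x i ^ 2 - lam : ℤ)) : ℂ)
        = if ∑ i, x i ^ 2 = (lam : ℤ) then (M : ℂ) else 0 := by
    intro x hx
    rw [sum_fracGrid (by omega), ← if_congr (sum_sq_eq_iff_dvd hM hx) rfl rfl,
      ← sum_range_fourierChar (by omega)]
    simp only [div_mul_eq_mul_div, mul_div_assoc]
  simp only [hexpand]
  rw [sum_comm, latticeSphere, mul_sum, sum_filter]
  refine sum_congr rfl fun x hx ↦ ?_
  rw [← mul_sum, horth x hx, mul_ite, mul_zero, mul_comm]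

lemma exists_norm_sum_latticeSphere_prod_le_of_sum_sq_le_one (hn : 5 ≤ n) : ∃ C : ℝ, 0 < C ∧
    ∀ (lam : ℕ) (g : Fin n → ℤ → ℂ), 1 ≤ lam →
      (∀ i, ∑ x ∈ Icc (-(lam.sqrt : ℤ)) lam.sqrt, ‖g i x‖ ^ 2 ≤ 1) →
      ‖∑ x ∈ latticeSphere n lam, ∏ i, g i (x i)‖ ≤ C * (√lam.sqrt ^ n / lam.sqrt ^ 2) := by
  have : Nonempty (Fin n) := ⟨⟨0, by omega⟩⟩
  obtain ⟨C, hC, hmoment⟩ := exists_sum_fracGrid_norm_squareExpSum_pow_le hn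
  refine ⟨n * C, by positivity, fun lam g hlam hg ↦ ?_⟩
  set N := lam.sqrt
  have hN : 0 < N := Nat.sqrt_pos.2 hlam
  have hNlam : N ^ 2 ≤ lam := Nat.sqrt_le' lam
  set M := (n + 1) * lam + 1
  have hNM : 2 * N ^ 2 < M :=
    Nat.lt_succ_of_le (Nat.mul_le_mul (by omega) hNlam)
  have hM0 : (0 : ℝ) < M := by positivity
  refine le_of_mul_le_mul_left ?_ hM0
  calc M * ‖∑ x ∈ latticeSphere n lam, ∏ i, g i (x i)‖
      = ‖∑ α ∈ fracGrid M, (∏ i, squareExpSum N (g i) α) * 𝐞 (-(α * lam))‖ := by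
        rw [sum_fracGrid_prod_squareExpSum (Nat.lt_succ_self _), norm_mul, Complex.norm_natCast]
    _ ≤ ∑ α ∈ fracGrid M, √N ^ n * ∏ i, ‖squareExpSum N (g i) α‖ / √N := by
        refine (norm_sum_le _ _).trans_eq (sum_congr rfl fun α _ ↦ ?_)
        rw [norm_mul, Circle.norm_coe, mul_one, norm_prod, prod_div_distrib, prod_const, card_univ,
          Fintype.card_fin]
        field_simp
    _ ≤ ∑ α ∈ fracGrid M, √N ^ n * ∑ i, (‖squareExpSum N (g i) α‖ / √N) ^ n := by
        gcongr with α
        simpa using prod_le_sum_pow_card fun i ↦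
          show 0 ≤ ‖squareExpSum N (g i) α‖ / √N by positivity
    _ = √N ^ n * ∑ i, ∑ α ∈ fracGrid M, (‖squareExpSum N (g i) α‖ / √N) ^ n := by
        rw [← mul_sum, sum_comm]
    _ ≤ √N ^ n * ∑ _i : Fin n, C * M / N ^ 2 := by
        gcongr with i
        exact hmoment N M (g i) hN hNM (hg i)
    _ = M * (n * C * (√N ^ n / N ^ 2)) := by
        rw [sum_const, card_univ, Fintype.card_fin, nsmul_eq_mul]
        ring

lemma exists_eq_sqrt_mul_of_sum_sq {ι : Type*} (s : Finset ι) (g : ι → ℂ) : ∃ h : ι → ℂ,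
    ∑ x ∈ s, ‖h x‖ ^ 2 ≤ 1 ∧ ∀ x ∈ s, g x = √(∑ x ∈ s, ‖g x‖ ^ 2) * h x := by
  set a := √(∑ x ∈ s, ‖g x‖ ^ 2)
  have hsq : a ^ 2 = ∑ x ∈ s, ‖g x‖ ^ 2 := Real.sq_sqrt (sum_nonneg fun _ _ ↦ sq_nonneg _)
  rcases eq_or_ne a 0 with ha | ha
  · refine ⟨0, by simp, fun x hx ↦ ?_⟩
    rw [ha, zero_pow two_ne_zero, eq_comm, sum_eq_zero_iff_of_nonneg fun _ _ ↦ sq_nonneg _] at hsq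
    simpa using hsq x hx
  · refine ⟨fun x ↦ (a : ℂ)⁻¹ * g x, ?_, fun x _ ↦ ?_⟩
    · simp only [norm_mul, norm_inv, Complex.norm_real, mul_pow, inv_pow, ← mul_sum, ← hsq,
        Real.norm_eq_abs, sq_abs]
      exact (inv_mul_cancel₀ (pow_ne_zero 2 ha)).le
    · rw [mul_inv_cancel_left₀ (Complex.ofReal_ne_zero.2 ha)]

lemma exists_norm_sum_latticeSphere_prod_le (hn : 5 ≤ n) : ∃ C : ℝ, 0 < C ∧
    ∀ (lam : ℕ) (g : Fin n → ℤ → ℂ), 1 ≤ lam →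
      ‖∑ x ∈ latticeSphere n lam, ∏ i, g i (x i)‖ ≤ C * (√lam.sqrt ^ n / lam.sqrt ^ 2)
        * ∏ i, √(∑ x ∈ Icc (-(lam.sqrt : ℤ)) lam.sqrt, ‖g i x‖ ^ 2) := by
  obtain ⟨C, hC, hbound⟩ := exists_norm_sum_latticeSphere_prod_le_of_sum_sq_le_one hn
  refine ⟨C, hC, fun lam g hlam ↦ ?_⟩
  choose h hh hgh using fun i ↦ exists_eq_sqrt_mul_of_sum_sq (Icc (-(lam.sqrt : ℤ)) lam.sqrt) (g i)
  have hprod : ∀ x ∈ latticeSphere n lam, ∏ i, g i (x i)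
      = (∏ i, √(∑ x ∈ Icc (-(lam.sqrt : ℤ)) lam.sqrt, ‖g i x‖ ^ 2) : ℝ) * ∏ i, h i (x i) := by
    intro x hx
    rw [Complex.ofReal_prod, ← prod_mul_distrib]
    exact prod_congr rfl fun i _ ↦ hgh i _ (Fintype.mem_piFinset.1 (mem_filter.1 hx).1 i)
  rw [sum_congr rfl hprod, ← mul_sum, norm_mul, Complex.norm_real,
    Real.norm_of_nonneg (by positivity), mul_comm]
  gcongr
  exact hbound lam h hlam hh

end CircleMethod

section TwoSquares

/-- The Gaussian integers of norm `a`. -/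
def gaussianSphere (a : ℕ) : Finset GaussianInt :=
  (latticeSphere 2 a).image fun x ↦ ⟨x 0, x 1⟩

lemma gaussianInt_norm_eq (z : GaussianInt) : z.norm = z.re ^ 2 + z.im ^ 2 := by
  rw [Zsqrtd.norm_def]
  ring

lemma mem_gaussianSphere {a : ℕ} {z : GaussianInt} : z ∈ gaussianSphere a ↔ z.norm = a := by
  simp only [gaussianSphere, mem_image, mem_latticeSphere, Fin.sum_univ_two]
  constructor
  · rintro ⟨x, hx, rfl⟩
    rwa [gaussianInt_norm_eq]
  · exact fun hz ↦ ⟨![z.re, z.im], by simpa [gaussianInt_norm_eq] using hz, rfl⟩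

lemma mem_gaussianSphere_one {u : GaussianInt} : u ∈ gaussianSphere 1 ↔ IsUnit u := by
  rw [mem_gaussianSphere, Nat.cast_one, Zsqrtd.norm_eq_one_iff' (by norm_num)]

lemma card_gaussianSphere_one : #(gaussianSphere 1) = 4 := by
  have : gaussianSphere 1 = {⟨1, 0⟩, ⟨-1, 0⟩, ⟨0, 1⟩, ⟨0, -1⟩} := by
    ext ⟨x, y⟩
    simp only [mem_gaussianSphere, gaussianInt_norm_eq, Nat.cast_one, mem_insert, mem_singleton,
      Zsqrtd.mk.injEq]
    constructor
    · intro h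
      have hx : x ^ 2 ≤ 1 := by linarith [sq_nonneg y]
      have hy : y ^ 2 ≤ 1 := by linarith [sq_nonneg x]
      obtain ⟨hx₁, hx₂⟩ := abs_le.1 ((sq_le_one_iff_abs_le_one x).1 hx)
      obtain ⟨hy₁, hy₂⟩ := abs_le.1 ((sq_le_one_iff_abs_le_one y).1 hy)
      interval_cases x <;> interval_cases y <;> simp_all
    · rintro (⟨rfl, rfl⟩ | ⟨rfl, rfl⟩ | ⟨rfl, rfl⟩ | ⟨rfl, rfl⟩) <;> rfl
  rw [this]
  decide

lemma gaussianInt_dvd_norm (z : GaussianInt) : z ∣ (z.norm : GaussianInt) :=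
  ⟨star z, Zsqrtd.norm_eq_mul_conj z⟩

lemma isCoprime_of_isCoprime_norm {z w : GaussianInt} (h : IsCoprime z.norm w.norm) :
    IsCoprime z w :=
  ((h.map (Int.castRingHom GaussianInt)).of_isCoprime_of_dvd_left
    (gaussianInt_dvd_norm z)).of_isCoprime_of_dvd_right (gaussianInt_dvd_norm w)

lemma exists_isUnit_of_mul_eq_mul {z w z₀ w₀ : GaussianInt} (hz₀ : z₀ ≠ 0)
    (hcop : IsCoprime z₀ w) (hnorm : z.norm = z₀.norm) (hmul : z * w = z₀ * w₀) :
    ∃ u, IsUnit u ∧ z₀ * u = z ∧ star u * w₀ = w := by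
  obtain ⟨u, rfl⟩ := hcop.dvd_of_dvd_mul_right ⟨w₀, hmul⟩
  have hu : u.norm = 1 := by
    rw [Zsqrtd.norm_mul] at hnorm
    exact (mul_eq_left₀ (mt GaussianInt.norm_eq_zero.1 hz₀)).1 hnorm
  refine ⟨u, (Zsqrtd.norm_eq_one_iff' (by norm_num) u).1 hu, rfl, ?_⟩
  have hw₀ : w₀ = u * w := mul_left_cancel₀ hz₀ (by rw [← hmul, mul_assoc])
  rw [hw₀, ← mul_assoc, mul_comm (star u), ← Zsqrtd.norm_eq_mul_conj, hu, Int.cast_one, one_mul]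

lemma card_gaussianSphere_mul_le {a b : ℕ} (ha : a ≠ 0) (hab : a.Coprime b) :
    #(gaussianSphere a) * #(gaussianSphere b) ≤ 4 * #(gaussianSphere (a * b)) := by
  rw [← card_product]
  refine card_le_mul_card_image_of_maps_to (f := fun p : GaussianInt × GaussianInt ↦ p.1 * p.2)
    (fun p hp ↦ ?_) 4 fun c _ ↦ ?_
  · simp only [mem_product, mem_gaussianSphere] at hp ⊢
    rw [Zsqrtd.norm_mul, hp.1, hp.2, Nat.cast_mul]
  rcases eq_empty_or_nonempty {p ∈ gaussianSphere a ×ˢ gaussianSphere b | p.1 * p.2 = c}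
    with he | ⟨⟨z₀, w₀⟩, h₀⟩
  · simp [he]
  rw [← card_gaussianSphere_one]
  refine (card_le_card fun p hp ↦ ?_).trans
    (card_image_le (f := fun u : GaussianInt ↦ (z₀ * u, star u * w₀)))
  obtain ⟨z, w⟩ := p
  simp only [mem_filter, mem_product, mem_gaussianSphere] at hp h₀
  obtain ⟨⟨hz₀, -⟩, hc₀⟩ := h₀
  obtain ⟨⟨hz, hw⟩, hc⟩ := hp
  obtain ⟨u, hu, rfl, rfl⟩ := exists_isUnit_of_mul_eq_mul (z₀ := z₀) (w₀ := w₀) (z := z) (w := w)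
    (fun h0 ↦ ha (by simpa [h0] using hz₀.symm))
    (isCoprime_of_isCoprime_norm (by rw [hz₀, hw]; exact Nat.isCoprime_iff_coprime.2 hab))
    (by rw [hz, hz₀]) (by rw [hc, hc₀])
  exact mem_image_of_mem _ (mem_gaussianSphere_one.2 hu)

lemma isCoprime_star_of_norm_eq_prime {p : ℕ} (hp : p.Prime) (hp2 : p ≠ 2) {π : GaussianInt}
    (hπ : π.norm = p) : IsCoprime π (star π) := by
  have hsq : π.re ^ 2 + π.im ^ 2 = p := by rw [← gaussianInt_norm_eq, hπ]
  have hre : ¬(p : ℤ) ∣ π.re := by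
    rintro ⟨c, hc⟩
    obtain ⟨d, hd⟩ : (p : ℤ) ∣ π.im :=
      (Nat.prime_iff_prime_int.1 hp).dvd_of_dvd_pow (n := 2)
        ⟨1 - p * c ^ 2, by rw [hc] at hsq; linear_combination hsq⟩
    have : (p : ℤ) * (c ^ 2 + d ^ 2) = 1 := by
      refine mul_left_cancel₀ (Nat.cast_ne_zero.2 hp.ne_zero : (p : ℤ) ≠ 0) ?_
      rw [hc, hd] at hsq
      linear_combination hsq
    exact (Nat.prime_iff_prime_int.1 hp).not_isUnit (IsUnit.of_mul_eq_one _ this)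
  have h2re : ¬(p : ℤ) ∣ 2 * π.re := fun h ↦
    ((Nat.prime_iff_prime_int.1 hp).dvd_or_dvd h).elim
      (fun h ↦ hp2 ((Nat.prime_dvd_prime_iff_eq hp Nat.prime_two).1 (by exact_mod_cast h))) hre
  obtain ⟨s, t, hst⟩ := (((Nat.prime_iff_prime_int.1 hp).irreducible.coprime_iff_not_dvd).2
    h2re).map (Int.castRingHom GaussianInt)
  -- `p = π * star π` and `2 * π.re = π + star π` generate the unit ideal
  have htrace : ((2 * π.re : ℤ) : GaussianInt) = π + star π := by
    ext <;> simp [two_mul]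
  simp only [eq_intCast, htrace, ← hπ, Zsqrtd.norm_eq_mul_conj] at hst
  exact ⟨s * star π + t, t, by linear_combination hst⟩

lemma eq_and_eq_of_mul_pow_mul_pow_eq {R : Type*} [CommRing R] [IsDomain R] {π σ u v : R}
    {i j k : ℕ} (hcop : IsCoprime π σ) (hπ : ¬IsUnit π) (hπ0 : π ≠ 0) (hσ0 : σ ≠ 0)
    (hu : IsUnit u) (hv : IsUnit v) (hi : i ≤ k) (hj : j ≤ k)
    (h : u * π ^ i * σ ^ (k - i) = v * π ^ j * σ ^ (k - j)) : i = j ∧ u = v := by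
  wlog hij : i ≤ j generalizing i j u v
  · exact (this hv hu hj hi h.symm (le_of_not_ge hij)).imp Eq.symm Eq.symm
  obtain ⟨d, rfl⟩ := Nat.exists_eq_add_of_le hij
  have hcancel : u * σ ^ d = v * π ^ d := by
    refine mul_left_cancel₀ (mul_ne_zero (pow_ne_zero i hπ0) (pow_ne_zero (k - (i + d)) hσ0)) ?_
    rw [show k - i = k - (i + d) + d by omega, pow_add, pow_add] at h
    linear_combination h
  have hd : d = 0 := by
    by_contra hd
    have hdvd : π ^ d ∣ u :=
      (hcop.pow (m := d) (n := d)).dvd_of_dvd_mul_right (hcancel ▸ dvd_mul_left _ _)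
    exact hπ ((isUnit_pow_iff hd).1 (isUnit_of_dvd_unit hdvd hu))
  subst hd
  simpa using hcancel

lemma four_mul_succ_le_card_gaussianSphere_prime_pow {p : ℕ} (hp : p.Prime) (hp1 : p % 4 = 1)
    (k : ℕ) : 4 * (k + 1) ≤ #(gaussianSphere (p ^ k)) := by
  have : Fact p.Prime := ⟨hp⟩
  obtain ⟨x, y, hxy⟩ := Nat.Prime.sq_add_sq (p := p) (by omega)
  obtain ⟨π, hπ⟩ : ∃ π : GaussianInt, π.norm = p :=
    ⟨⟨x, y⟩, by rw [gaussianInt_norm_eq, ← hxy]; push_cast; rfl⟩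
  have hstar : (star π).norm = p := by rw [Zsqrtd.norm_conj, hπ]
  have hp0 : (p : ℤ) ≠ 0 := Nat.cast_ne_zero.2 hp.ne_zero
  have hunit : ¬IsUnit π := by
    rw [← Zsqrtd.norm_eq_one_iff' (by norm_num), hπ]
    exact_mod_cast hp.ne_one
  calc 4 * (k + 1) = #(gaussianSphere 1 ×ˢ range (k + 1)) := by
        rw [card_product, card_gaussianSphere_one, card_range]
    _ ≤ #(gaussianSphere (p ^ k)) := ?_
  refine card_le_card_of_injOn (fun q ↦ q.1 * π ^ q.2 * star π ^ (k - q.2)) ?_ ?_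
  · rintro ⟨u, j⟩ h
    simp only [mem_coe, mem_product, mem_gaussianSphere, mem_range] at h ⊢
    have hpow (z : GaussianInt) (m : ℕ) : (z ^ m).norm = z.norm ^ m :=
      map_pow Zsqrtd.normMonoidHom z m
    rw [Zsqrtd.norm_mul, Zsqrtd.norm_mul, hpow, hpow, hπ, hstar, h.1, mul_assoc, ← pow_add,
      Nat.add_sub_cancel' (Nat.lt_succ_iff.1 h.2), Nat.cast_one, one_mul, Nat.cast_pow]
  · rintro ⟨u, i⟩ hi ⟨v, j⟩ hj h
    simp only [mem_coe, mem_product, mem_gaussianSphere_one, mem_range, Nat.lt_succ_iff] at hi hj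
    obtain ⟨rfl, rfl⟩ := eq_and_eq_of_mul_pow_mul_pow_eq
      (isCoprime_star_of_norm_eq_prime hp (by omega) hπ) hunit
      (fun h0 ↦ hp0 (by simpa [h0] using hπ.symm))
      (fun h0 ↦ hp0 (by simpa [h0] using hstar.symm)) hi.1 hj.1 hi.2 hj.2 h
    rfl

lemma four_le_card_gaussianSphere_sq {m : ℕ} (hm : m ≠ 0) : 4 ≤ #(gaussianSphere (m ^ 2)) := by
  rw [← card_gaussianSphere_one]
  refine card_le_card_of_injOn (fun u ↦ (m : GaussianInt) * u) (fun u hu ↦ ?_)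
    (mul_right_injective₀ (Nat.cast_ne_zero.2 hm)).injOn
  simp only [mem_coe, mem_gaussianSphere] at hu ⊢
  rw [Zsqrtd.norm_mul, hu, Zsqrtd.norm_natCast]
  push_cast
  ring

/-- The divisor sum of `χ₄`; by Jacobi, four times it is the number of representations of `a ≠ 0`
as a sum of two squares. -/
def divisorSumChiFour (a : ℕ) : ℤ :=
  ∑ d ∈ a.divisors, ZMod.χ₄ d

lemma divisorSumChiFour_mul {a b : ℕ} (h : a.Coprime b) :
    divisorSumChiFour (a * b) = divisorSumChiFour a * divisorSumChiFour b := by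
  have hzeta (c : ℕ) : divisorSumChiFour c
      = ((ArithmeticFunction.zeta : ArithmeticFunction ℤ)
        * toArithmeticFunction (ZMod.χ₄ ·)) c := by
    rw [ArithmeticFunction.coe_zeta_mul_apply]
    refine sum_congr rfl fun d hd ↦ ?_
    simp [toArithmeticFunction, (Nat.pos_of_mem_divisors hd).ne']
  simp only [hzeta]
  exact (ArithmeticFunction.isMultiplicative_zeta.natCast.mul
    (DirichletCharacter.isMultiplicative_toArithmeticFunction ZMod.χ₄)).map_mul_of_coprime h

lemma divisorSumChiFour_prime_pow {p : ℕ} (hp : p.Prime) (k : ℕ) :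
    divisorSumChiFour (p ^ k) = ∑ j ∈ range (k + 1), ZMod.χ₄ p ^ j := by
  simp only [divisorSumChiFour, Nat.sum_divisors_prime_pow hp, Nat.cast_pow, map_pow]

lemma four_mul_divisorSumChiFour_prime_pow_le {p : ℕ} (hp : p.Prime) (hodd : Odd p) (k : ℕ) :
    0 ≤ divisorSumChiFour (p ^ k) ∧
      4 * divisorSumChiFour (p ^ k) ≤ #(gaussianSphere (p ^ k)) := by
  rw [divisorSumChiFour_prime_pow hp]
  rcases Nat.odd_mod_four_iff.1 (Nat.odd_iff.1 hodd) with h | h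
  · rw [ZMod.χ₄_nat_one_mod_four h]
    simp only [one_pow, sum_const, card_range, nsmul_eq_mul, mul_one]
    exact ⟨by positivity, by exact_mod_cast four_mul_succ_le_card_gaussianSphere_prime_pow hp h k⟩
  · rw [ZMod.χ₄_nat_three_mod_four h, neg_one_geom_sum]
    split_ifs with hk
    · simp
    · obtain ⟨l, rfl⟩ : Even k := by simpa [Nat.even_add_one] using hk
      rw [← two_mul, mul_comm 2 l, pow_mul]
      exact ⟨by norm_num, by
        exact_mod_cast four_le_card_gaussianSphere_sq (pow_ne_zero l hp.ne_zero)⟩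

lemma four_mul_divisorSumChiFour_le {a : ℕ} (ha : Odd a) :
    0 ≤ divisorSumChiFour a ∧ 4 * divisorSumChiFour a ≤ #(gaussianSphere a) := by
  induction a using Nat.recOnPosPrimePosCoprime with
  | zero => exact absurd ha (by decide)
  | one => simp [divisorSumChiFour, card_gaussianSphere_one]
  | prime_pow p k hp hk =>
    exact four_mul_divisorSumChiFour_prime_pow_le hp ((Nat.odd_pow_iff hk.ne').1 ha) k
  | coprime a b ha1 _ hab iha ihb =>
    obtain ⟨hoa, hob⟩ := Nat.odd_mul.1 ha
    obtain ⟨ha0, ha4⟩ := iha hoa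
    obtain ⟨hb0, hb4⟩ := ihb hob
    rw [divisorSumChiFour_mul hab]
    have hmul : (#(gaussianSphere a) : ℤ) * #(gaussianSphere b)
        ≤ 4 * #(gaussianSphere (a * b)) := by
      exact_mod_cast card_gaussianSphere_mul_le (by omega) hab
    refine ⟨mul_nonneg ha0 hb0, ?_⟩
    linarith [mul_le_mul ha4 hb4 (by positivity) (by positivity)]

end TwoSquares

section DirichletInvolution

lemma pairwiseDisjoint_product_of_eq {α : Type*} {s : ℕ → Finset α} {g : α → ℕ}
    (hg : ∀ a, ∀ x ∈ s a, g x = a) (I : Set (ℕ × ℕ)) :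
    I.PairwiseDisjoint fun p ↦ s p.1 ×ˢ s p.2 := by
  intro p _ q _ hpq
  refine disjoint_left.2 fun x hp hq ↦ hpq (Prod.ext ?_ ?_)
  · exact (hg _ _ (mem_product.1 hp).1).symm.trans (hg _ _ (mem_product.1 hq).1)
  · exact (hg _ _ (mem_product.1 hp).2).symm.trans (hg _ _ (mem_product.1 hq).2)

/-- The ways to write `2 * m` as a sum of two positive odd numbers. -/
def oddAntidiagonal (m : ℕ) : Finset (ℕ × ℕ) :=
  {p ∈ antidiagonal (2 * m) | Odd p.1}

lemma mem_oddAntidiagonal {m : ℕ} {p : ℕ × ℕ} :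
    p ∈ oddAntidiagonal m ↔ p.1 + p.2 = 2 * m ∧ Odd p.1 ∧ Odd p.2 := by
  simp only [oddAntidiagonal, mem_filter, HasAntidiagonal.mem_antidiagonal,
    Nat.odd_iff]
  omega

/-- The quadruples `((d, δ), (e, ε))` of odd numbers with `d * δ + e * ε = 2 * m`. -/
def oddQuadruples (m : ℕ) : Finset ((ℕ × ℕ) × (ℕ × ℕ)) :=
  (oddAntidiagonal m).biUnion fun p ↦ p.1.divisorsAntidiagonal ×ˢ p.2.divisorsAntidiagonal

lemma mem_oddQuadruples {m d δ e ε : ℕ} : ((d, δ), (e, ε)) ∈ oddQuadruples m ↔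
    d * δ + e * ε = 2 * m ∧ (Odd d ∧ Odd δ) ∧ (Odd e ∧ Odd ε) := by
  simp only [oddQuadruples, mem_biUnion, mem_oddAntidiagonal, mem_product,
    Nat.mem_divisorsAntidiagonal, ← Nat.odd_mul (m := d), ← Nat.odd_mul (m := e)]
  constructor
  · rintro ⟨p, h, ⟨h₁, -⟩, h₂, -⟩
    rwa [← h₁, ← h₂] at h
  · exact fun h ↦ ⟨(d * δ, e * ε), h, ⟨rfl, h.2.1.pos.ne'⟩, rfl, h.2.2.pos.ne'⟩

/-- The sign `χ₄ d * χ₄ e` of a quadruple `((d, δ), (e, ε))`. -/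
def quadSign (x : (ℕ × ℕ) × (ℕ × ℕ)) : ℤ :=
  ZMod.χ₄ x.1.1 * ZMod.χ₄ x.2.1

lemma chiFour_add_mul_chiFour {e w : ℕ} (he : Odd e) (hw : Even w) :
    ZMod.χ₄ ((e + w : ℕ) : ZMod 4) * ZMod.χ₄ e = if 4 ∣ w then 1 else -1 := by
  have hw' := Nat.even_iff.1 hw
  rcases Nat.odd_mod_four_iff.1 (Nat.odd_iff.1 he) with h | h <;> split_ifs with h4
  · rw [ZMod.χ₄_nat_one_mod_four h, ZMod.χ₄_nat_one_mod_four (by omega), one_mul]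
  · rw [ZMod.χ₄_nat_one_mod_four h, ZMod.χ₄_nat_three_mod_four (by omega), mul_one]
  · rw [ZMod.χ₄_nat_three_mod_four h, ZMod.χ₄_nat_three_mod_four (by omega), neg_one_mul, neg_neg]
  · rw [ZMod.χ₄_nat_three_mod_four h, ZMod.χ₄_nat_one_mod_four (by omega), one_mul]

/-- The quadruple `((d, δ), (e, ε))` with `d - e = w`, `e = v * w + r` and `δ + ε = s`. -/
def dirichletQuad (v w r s δ : ℕ) : (ℕ × ℕ) × (ℕ × ℕ) :=
  ((v * w + r + w, δ), (v * w + r, s - δ))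

/-- The conditions under which `dirichletQuad v w r s δ` is an odd quadruple for `m` with
`v = e / (d - e)`. They are symmetric in `(w, r)` and `(s, δ)`. -/
structure IsDirichletParam (m v w r s δ : ℕ) : Prop where
  r_lt : r < w
  delta_lt : δ < s
  even_w : Even w
  even_s : Even s
  odd_r : Odd r
  odd_delta : Odd δ
  sum_eq : v * w * s + w * δ + r * s = 2 * m

lemma IsDirichletParam.symm {m v w r s δ : ℕ} (h : IsDirichletParam m v w r s δ) :
    IsDirichletParam m v s δ w r :=
  ⟨h.delta_lt, h.r_lt, h.even_s, h.even_w, h.odd_delta, h.odd_r, by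
    linear_combination h.sum_eq⟩

lemma IsDirichletParam.dirichletQuad_mem {m v w r s δ : ℕ} (h : IsDirichletParam m v w r s δ) :
    dirichletQuad v w r s δ ∈ oddQuadruples m ∧
      (dirichletQuad v w r s δ).2.1 < (dirichletQuad v w r s δ).1.1 := by
  have hodd : Odd (v * w + r) := (h.even_w.mul_left v).add_odd h.odd_r
  refine ⟨mem_oddQuadruples.2 ⟨?_, ⟨hodd.add_even h.even_w, h.odd_delta⟩, hodd,
    Nat.Even.sub_odd h.delta_lt.le h.even_s h.odd_delta⟩, Nat.lt_add_of_pos_right (by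
      have := h.r_lt
      omega)⟩
  obtain ⟨t, rfl⟩ := Nat.exists_eq_add_of_le h.delta_lt.le
  rw [Nat.add_sub_cancel_left]
  linear_combination h.sum_eq

lemma exists_isDirichletParam {m : ℕ} {x : (ℕ × ℕ) × (ℕ × ℕ)} (hx : x ∈ oddQuadruples m)
    (hlt : x.2.1 < x.1.1) :
    ∃ v w r s δ, IsDirichletParam m v w r s δ ∧ dirichletQuad v w r s δ = x := by
  obtain ⟨⟨d, δ⟩, e, ε⟩ := x
  obtain ⟨hsum, ⟨hd, hδ⟩, he, hε⟩ := mem_oddQuadruples.1 hx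
  obtain ⟨w, rfl⟩ := Nat.exists_eq_add_of_le (show e ≤ d from hlt.le)
  have hw0 : 0 < w := by
    simp only at hlt
    omega
  have hw : Even w := (Nat.odd_add.1 hd).1 he
  have hdiv : e / w * w + e % w = e := Nat.div_add_mod' e w
  refine ⟨e / w, w, e % w, δ + ε, δ, ⟨Nat.mod_lt e hw0, Nat.lt_add_of_pos_right hε.pos, hw,
    hδ.add_odd hε, ?_, hδ, ?_⟩, ?_⟩
  · rw [← hdiv] at he
    exact (Nat.odd_add'.1 he).2 (hw.mul_left _)
  · rw [← hsum]
    linear_combination (δ + ε) * hdiv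
  · rw [dirichletQuad, hdiv, Nat.add_sub_cancel_left]

/-- Dirichlet's involution on the quadruples with `e < d`: it exchanges `(d - e, e % (d - e))` and
`(δ + ε, δ)` and keeps `e / (d - e)`. -/
def dirichletInvolution (x : (ℕ × ℕ) × (ℕ × ℕ)) : (ℕ × ℕ) × (ℕ × ℕ) :=
  dirichletQuad (x.2.1 / (x.1.1 - x.2.1)) (x.1.2 + x.2.2) x.1.2 (x.1.1 - x.2.1)
    (x.2.1 % (x.1.1 - x.2.1))

lemma dirichletInvolution_dirichletQuad {v w r s δ : ℕ} (hr : r < w) (hδ : δ ≤ s) :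
    dirichletInvolution (dirichletQuad v w r s δ) = dirichletQuad v s δ w r := by
  have hdiv : (v * w + r) / w = v := by
    rw [mul_comm, Nat.mul_add_div (by omega), Nat.div_eq_of_lt hr, add_zero]
  have hmod : (v * w + r) % w = r := by
    rw [mul_comm, Nat.mul_add_mod, Nat.mod_eq_of_lt hr]
  simp only [dirichletInvolution, dirichletQuad, Nat.add_sub_cancel_left, hdiv, hmod,
    Nat.add_sub_cancel' hδ]

lemma IsDirichletParam.quadSign_dirichletQuad {m v w r s δ : ℕ}
    (h : IsDirichletParam m v w r s δ) :
    quadSign (dirichletQuad v w r s δ) = if 4 ∣ w then 1 else -1 :=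
  chiFour_add_mul_chiFour ((h.even_w.mul_left v).add_odd h.odd_r) h.even_w

lemma IsDirichletParam.quadSign_add_quadSign {m v w r s δ : ℕ} (hm : Odd m)
    (h : IsDirichletParam m v w r s δ) :
    quadSign (dirichletQuad v w r s δ) + quadSign (dirichletQuad v s δ w r) = 0 := by
  rw [h.quadSign_dirichletQuad, h.symm.quadSign_dirichletQuad]
  have hmod : 4 ∣ w ↔ ¬4 ∣ s := by
    obtain ⟨a, rfl⟩ := h.even_w
    obtain ⟨b, rfl⟩ := h.even_s
    obtain ⟨c, rfl⟩ := h.odd_r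
    obtain ⟨f, rfl⟩ := h.odd_delta
    have : 2 * (v * a * b + a * f + b * c) + a + b = m := by linarith [h.sum_eq]
    have := Nat.odd_iff.1 hm
    omega
  by_cases h4 : 4 ∣ s <;> simp [hmod, h4]

lemma sum_quadSign_of_lt {m : ℕ} (hm : Odd m) :
    ∑ x ∈ oddQuadruples m with x.2.1 < x.1.1, quadSign x = 0 := by
  have hparam (x) (hx : x ∈ {x ∈ oddQuadruples m | x.2.1 < x.1.1}) :=
    exists_isDirichletParam (mem_filter.1 hx).1 (mem_filter.1 hx).2
  refine sum_involution (fun x _ ↦ dirichletInvolution x) ?_ ?_ ?_ ?_ <;> intro x hx <;>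
    obtain ⟨v, w, r, s, δ, h, rfl⟩ := hparam x hx <;>
    simp only [dirichletInvolution_dirichletQuad h.r_lt h.delta_lt.le]
  · exact h.quadSign_add_quadSign hm
  · intro hne heq
    have := h.quadSign_add_quadSign hm
    rw [heq] at this
    omega
  · exact mem_filter.2 h.symm.dirichletQuad_mem
  · exact dirichletInvolution_dirichletQuad h.delta_lt h.r_lt.le

lemma sum_quadSign_of_gt {m : ℕ} (hm : Odd m) :
    ∑ x ∈ oddQuadruples m with x.1.1 < x.2.1, quadSign x = 0 := by
  rw [← sum_quadSign_of_lt hm]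
  refine sum_nbij' Prod.swap Prod.swap ?_ ?_ (fun _ _ ↦ rfl) (fun _ _ ↦ rfl)
    fun _ _ ↦ mul_comm _ _ <;>
  · rintro ⟨⟨d, δ⟩, e, ε⟩ hx
    rw [mem_filter, mem_oddQuadruples] at hx
    exact mem_filter.2 ⟨mem_oddQuadruples.2 ⟨by linarith [hx.1.1], hx.1.2.2, hx.1.2.1⟩, hx.2⟩

lemma le_sum_quadSign_of_eq {m : ℕ} :
    (m : ℤ) ≤ ∑ x ∈ oddQuadruples m with x.1.1 = x.2.1, quadSign x := by
  calc (m : ℤ) = #(range m) := by rw [card_range]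
    _ ≤ #{x ∈ oddQuadruples m | x.1.1 = x.2.1} := ?_
    _ = ∑ x ∈ oddQuadruples m with x.1.1 = x.2.1, quadSign x := ?_
  · refine Nat.cast_le.2 (card_le_card_of_injOn
      (fun k ↦ ((1, 2 * k + 1), (1, 2 * m - (2 * k + 1)))) (fun k hk ↦ ?_) fun k _ l _ h ↦ ?_)
    · have := mem_range.1 (mem_coe.1 hk)
      refine mem_filter.2 ⟨mem_oddQuadruples.2 ?_, rfl⟩
      simp only [Nat.odd_iff, one_mul, true_and]
      omega
    · simp only [Prod.mk.injEq] at h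
      omega
  · rw [card_eq_sum_ones, Nat.cast_sum]
    refine sum_congr rfl ?_
    rintro ⟨⟨d, δ⟩, e, ε⟩ hx
    obtain ⟨hx, rfl : d = e⟩ := mem_filter.1 hx
    have hone := chiFour_add_mul_chiFour (mem_oddQuadruples.1 hx).2.1.1 Even.zero
    rw [if_pos (dvd_zero 4), add_zero] at hone
    exact Nat.cast_one.trans hone.symm

lemma le_sum_quadSign {m : ℕ} (hm : Odd m) : (m : ℤ) ≤ ∑ x ∈ oddQuadruples m, quadSign x := by
  have hsplit : ∑ x ∈ oddQuadruples m, quadSign x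
      = ∑ x ∈ oddQuadruples m with x.2.1 < x.1.1, quadSign x
        + (∑ x ∈ oddQuadruples m with x.1.1 < x.2.1, quadSign x
          + ∑ x ∈ oddQuadruples m with x.1.1 = x.2.1, quadSign x) := by
    simp only [sum_filter, ← sum_add_distrib]
    refine sum_congr rfl fun x _ ↦ ?_
    rcases lt_trichotomy x.1.1 x.2.1 with h | h | h
    · simp [h, h.not_gt, h.ne]
    · simp [h]
    · simp [h, h.not_gt, h.ne']
  rw [hsplit, sum_quadSign_of_lt hm, sum_quadSign_of_gt hm, zero_add, zero_add]
  exact le_sum_quadSign_of_eq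

lemma sum_quadSign_eq (m : ℕ) : ∑ x ∈ oddQuadruples m, quadSign x
    = ∑ p ∈ oddAntidiagonal m, divisorSumChiFour p.1 * divisorSumChiFour p.2 := by
  have hfst (a : ℕ) : ∑ x ∈ a.divisorsAntidiagonal, (ZMod.χ₄ x.1 : ℤ) = divisorSumChiFour a :=
    Nat.sum_divisorsAntidiagonal fun d _ ↦ (ZMod.χ₄ d : ℤ)
  rw [oddQuadruples, sum_biUnion (pairwiseDisjoint_product_of_eq (g := fun x ↦ x.1 * x.2)
    (fun a x hx ↦ (Nat.mem_divisorsAntidiagonal.1 hx).1) _)]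
  refine sum_congr rfl fun p _ ↦ ?_
  rw [← hfst, ← hfst, sum_mul_sum, ← sum_product']
  rfl

end DirichletInvolution

section FourSquares

lemma odd_gaussianInt_norm_iff {z : GaussianInt} : Odd z.norm ↔ Odd (z.re + z.im) := by
  simp only [gaussianInt_norm_eq, Int.odd_add, Int.odd_pow' two_ne_zero,
    Int.even_pow' two_ne_zero]

/-- The pairs of Gaussian integers whose norms are odd and add up to `2 * m`. -/
def oddGaussianPairs (m : ℕ) : Finset (GaussianInt × GaussianInt) :=
  (oddAntidiagonal m).biUnion fun p ↦ gaussianSphere p.1 ×ˢ gaussianSphere p.2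

lemma mem_oddGaussianPairs {m : ℕ} {z w : GaussianInt} : (z, w) ∈ oddGaussianPairs m ↔
    z.norm + w.norm = 2 * m ∧ Odd (z.re + z.im) ∧ Odd (w.re + w.im) := by
  rw [← odd_gaussianInt_norm_iff, ← odd_gaussianInt_norm_iff]
  simp only [oddGaussianPairs, mem_biUnion, mem_oddAntidiagonal, mem_product, mem_gaussianSphere]
  constructor
  · rintro ⟨p, ⟨hsum, hodd⟩, hz, hw⟩
    rw [hz, hw, Int.odd_coe_nat, Int.odd_coe_nat]
    exact ⟨by exact_mod_cast hsum, hodd⟩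
  · rintro ⟨hsum, hz, hw⟩
    obtain ⟨a, ha⟩ := Int.eq_ofNat_of_zero_le (GaussianInt.norm_nonneg z)
    obtain ⟨b, hb⟩ := Int.eq_ofNat_of_zero_le (GaussianInt.norm_nonneg w)
    rw [ha, Int.odd_coe_nat] at hz
    rw [hb, Int.odd_coe_nat] at hw
    rw [ha, hb] at hsum
    exact ⟨(a, b), ⟨by exact_mod_cast hsum, hz, hw⟩, ha, hb⟩

lemma sixteen_mul_le_card_oddGaussianPairs {m : ℕ} (hm : Odd m) :
    16 * m ≤ #(oddGaussianPairs m) := by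
  rw [oddGaussianPairs, card_biUnion (pairwiseDisjoint_product_of_eq
    (g := fun z : GaussianInt ↦ z.norm.toNat)
    (fun a z hz ↦ by rw [mem_gaussianSphere.1 hz, Int.toNat_natCast]) _)]
  zify
  calc (16 * m : ℤ)
      ≤ 16 * ∑ p ∈ oddAntidiagonal m, divisorSumChiFour p.1 * divisorSumChiFour p.2 := by
        rw [← sum_quadSign_eq]
        gcongr
        exact le_sum_quadSign hm
    _ ≤ ∑ p ∈ oddAntidiagonal m, (#(gaussianSphere p.1 ×ˢ gaussianSphere p.2) : ℤ) := by
        rw [mul_sum]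
        refine sum_le_sum fun p hp ↦ ?_
        obtain ⟨-, h₁, h₂⟩ := mem_oddAntidiagonal.1 hp
        obtain ⟨ha0, ha⟩ := four_mul_divisorSumChiFour_le h₁
        obtain ⟨hb0, hb⟩ := four_mul_divisorSumChiFour_le h₂
        rw [card_product, Nat.cast_mul]
        linarith [mul_le_mul ha hb (by positivity) (by positivity)]

lemma card_oddGaussianPairs_filter_not_even_le (m : ℕ) :
    #{p ∈ oddGaussianPairs m | ¬Even (p.1.re + p.2.re)}
      ≤ #{p ∈ oddGaussianPairs m | Even (p.1.re + p.2.re)} := by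
  refine card_le_card_of_injOn (fun p ↦ (p.1, ⟨p.2.im, p.2.re⟩)) ?_ ?_
  · rintro ⟨z, w⟩ hp
    simp only [coe_filter, Set.mem_ofPred_eq, mem_oddGaussianPairs,
      gaussianInt_norm_eq w, gaussianInt_norm_eq ⟨w.im, w.re⟩, Int.even_iff, Int.odd_iff] at hp ⊢
    omega
  · rintro ⟨z, w⟩ - ⟨z', w'⟩ - h
    simp only [Prod.mk.injEq, Zsqrtd.mk.injEq] at h
    exact Prod.ext h.1 (Zsqrtd.ext h.2.2 h.2.1)

lemma card_oddGaussianPairs_filter_even_le (m : ℕ) :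
    #{p ∈ oddGaussianPairs m | Even (p.1.re + p.2.re)} ≤ #(latticeSphere 4 m) := by
  have hhalf {p : GaussianInt × GaussianInt}
      (hp : p ∈ {p ∈ oddGaussianPairs m | Even (p.1.re + p.2.re)}) :
      ∃ a b c d : ℤ, p = (⟨a + b, c + d⟩, ⟨a - b, c - d⟩) ∧
        a ^ 2 + b ^ 2 + c ^ 2 + d ^ 2 = m := by
    obtain ⟨⟨z₁, z₂⟩, w₁, w₂⟩ := p
    simp only [mem_filter, mem_oddGaussianPairs, gaussianInt_norm_eq, Int.odd_iff,
      Int.even_iff] at hp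
    obtain ⟨⟨hsum, hz, hw⟩, hre⟩ := hp
    obtain ⟨a, rfl⟩ : ∃ a, z₁ = a + a - w₁ := ⟨(z₁ + w₁) / 2, by omega⟩
    obtain ⟨c, rfl⟩ : ∃ c, z₂ = c + c - w₂ := ⟨(z₂ + w₂) / 2, by omega⟩
    refine ⟨a, a - w₁, c, c - w₂, ?_, by linarith⟩
    simp only [Prod.mk.injEq, Zsqrtd.mk.injEq]
    omega
  refine card_le_card_of_injOn (fun p ↦ ![(p.1.re + p.2.re) / 2, (p.1.re - p.2.re) / 2,
    (p.1.im + p.2.im) / 2, (p.1.im - p.2.im) / 2]) (fun p hp ↦ ?_) fun p hp q hq h ↦ ?_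
  · obtain ⟨a, b, c, d, rfl, hm⟩ := hhalf hp
    rw [mem_coe, mem_latticeSphere, ← hm, Fin.sum_univ_four]
    simp [← two_mul]
  · obtain ⟨a, b, c, d, rfl, -⟩ := hhalf hp
    obtain ⟨a', b', c', d', rfl, -⟩ := hhalf hq
    simp only [Matrix.vecCons_inj, and_true] at h
    simp only [Prod.mk.injEq, Zsqrtd.mk.injEq]
    omega

lemma eight_mul_le_card_latticeSphere_four {m : ℕ} (hm : Odd m) :
    8 * m ≤ #(latticeSphere 4 m) := by
  have hsplit := card_filter_add_card_filter_not (s := oddGaussianPairs m)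
    (fun p ↦ Even (p.1.re + p.2.re))
  have := sixteen_mul_le_card_oddGaussianPairs hm
  have := card_oddGaussianPairs_filter_not_even_le m
  have := card_oddGaussianPairs_filter_even_le m
  omega

end FourSquares

section LatticePoints

lemma sum_card_latticeSphere_le {n lam : ℕ} {K : Finset ℕ} (hK : ∀ k ∈ K, k ^ 2 ≤ lam) :
    ∑ k ∈ K, #(latticeSphere n (lam - k ^ 2)) ≤ #(latticeSphere (n + 1) lam) := by
  rw [← card_sigma]
  refine card_le_card_of_injOn (fun t ↦ (Fin.cons (t.1 : ℤ) t.2 : Fin (n + 1) → ℤ)) ?_ ?_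
  · rintro ⟨k, x⟩ h
    simp only [mem_coe, mem_sigma, mem_latticeSphere] at h
    rw [mem_coe, mem_latticeSphere, Fin.sum_univ_succ]
    simp only [Fin.cons_zero, Fin.cons_succ]
    rw [h.2, Nat.cast_sub (hK k h.1), Nat.cast_pow]
    ring
  · rintro ⟨k, x⟩ - ⟨l, y⟩ - h
    obtain ⟨hkl, rfl⟩ := Fin.cons_inj.1 h
    obtain rfl : k = l := Nat.cast_inj.1 hkl
    rfl

lemma card_latticeSphere_five_pos (lam : ℕ) : 0 < #(latticeSphere 5 lam) := by
  obtain ⟨a, b, c, d, h⟩ := Nat.sum_four_squares lam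
  refine card_pos.2 ⟨![a, b, c, d, 0], mem_latticeSphere.2 ?_⟩
  rw [Fin.sum_univ_five, ← h]
  simp

lemma exists_finset_odd_sub_sq (lam : ℕ) : ∃ K : Finset ℕ, #K = lam.sqrt / 4 ∧
    ∀ k ∈ K, 4 * k ^ 2 ≤ lam ∧ Odd (lam - k ^ 2) := by
  set c := (lam + 1) % 2
  refine ⟨(range (lam.sqrt / 4)).image fun k ↦ 2 * k + c, ?_, forall_mem_image.2 fun k hk ↦ ?_⟩
  · rw [card_image_of_injective _ fun a b (h : 2 * a + c = 2 * b + c) ↦ by omega, card_range]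
  · have hle : 2 * (2 * k + c) ≤ lam.sqrt := by
      have := mem_range.1 hk
      omega
    have hfour : 4 * (2 * k + c) ^ 2 ≤ lam := by
      linarith [Nat.pow_le_pow_left hle 2, Nat.sqrt_le' lam]
    refine ⟨hfour, ?_⟩
    rw [Nat.odd_sub (by omega), Nat.even_pow' two_ne_zero, Nat.odd_iff, Nat.even_iff]
    omega

lemma sqrt_pow_three_le_card_latticeSphere_five (lam : ℕ) :
    lam.sqrt ^ 3 ≤ 64 * #(latticeSphere 5 lam) := by
  set s := lam.sqrt
  rcases lt_or_ge s 4 with hs | hs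
  · calc s ^ 3 ≤ 4 ^ 3 := Nat.pow_le_pow_left hs.le 3
      _ ≤ 64 * #(latticeSphere 5 lam) :=
        Nat.le_mul_of_pos_right 64 (card_latticeSphere_five_pos lam)
  · obtain ⟨K, hcard, hK⟩ := exists_finset_odd_sub_sq lam
    have hsum : s / 4 * (6 * s ^ 2) ≤ #(latticeSphere 5 lam) := by
      rw [← hcard, ← smul_eq_mul]
      refine (card_nsmul_le_sum K _ _ fun k hk ↦ ?_).trans
        (sum_card_latticeSphere_le fun k hk ↦ by linarith [(hK k hk).1])
      have := eight_mul_le_card_latticeSphere_four (hK k hk).2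
      have := (hK k hk).1
      have : s ^ 2 ≤ lam := Nat.sqrt_le' lam
      omega
    calc s ^ 3 = s * s ^ 2 := pow_succ' s 2
      _ ≤ 8 * (s / 4) * s ^ 2 := Nat.mul_le_mul_right _ (by omega)
      _ ≤ 64 * (s / 4 * (6 * s ^ 2)) := by linarith [Nat.zero_le (s / 4 * s ^ 2)]
      _ ≤ 64 * #(latticeSphere 5 lam) := Nat.mul_le_mul_left _ hsum

lemma le_sqrt_sub_sq {k t lam : ℕ} (h : k + t ≤ lam.sqrt) : t ≤ (lam - k ^ 2).sqrt := by
  refine Nat.le_sqrt'.2 (Nat.le_sub_of_add_le ?_)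
  calc t ^ 2 + k ^ 2 ≤ (t + k) ^ 2 := pow_add_pow_le t.zero_le k.zero_le two_ne_zero
    _ ≤ lam.sqrt ^ 2 := Nat.pow_le_pow_left (by rwa [add_comm]) 2
    _ ≤ lam := Nat.sqrt_le' lam

lemma exists_mul_sqrt_pow_le_card_latticeSphere {n : ℕ} (hn : 5 ≤ n) : ∃ c : ℝ, 0 < c ∧
    ∀ lam : ℕ, 1 ≤ lam → c * (lam.sqrt : ℝ) ^ (n - 2) ≤ #(latticeSphere n lam) := by
  induction n, hn using Nat.le_induction with
  | base =>
    refine ⟨1 / 64, by norm_num, fun lam _ ↦ ?_⟩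
    have : (lam.sqrt : ℝ) ^ 3 ≤ 64 * #(latticeSphere 5 lam) :=
      mod_cast sqrt_pow_three_le_card_latticeSphere_five lam
    linarith
  | succ n hn ih =>
    obtain ⟨c, hc, ih⟩ := ih
    refine ⟨c * (1 / 2) ^ (n - 1), by positivity, fun lam hlam ↦ ?_⟩
    set s := lam.sqrt
    have hs : 0 < s := Nat.sqrt_pos.2 hlam
    have hsphere (k : ℕ) (hk : k ∈ range (s / 2 + 1)) :
        c * ((s : ℝ) / 2) ^ (n - 2) ≤ #(latticeSphere n (lam - k ^ 2)) := by
      have hsqrt : s - s / 2 ≤ (lam - k ^ 2).sqrt :=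
        le_sqrt_sub_sq (by have := mem_range.1 hk; omega)
      have hhalf : (s : ℝ) / 2 ≤ (lam - k ^ 2).sqrt := by
        rw [div_le_iff₀ two_pos]
        exact_mod_cast (by omega : s ≤ (lam - k ^ 2).sqrt * 2)
      refine le_trans (by gcongr) (ih _ (Nat.sqrt_pos.1 (by omega)))
    calc c * (1 / 2) ^ (n - 1) * (s : ℝ) ^ (n + 1 - 2)
        = (s : ℝ) / 2 * (c * ((s : ℝ) / 2) ^ (n - 2)) := by
          rw [show n + 1 - 2 = n - 2 + 1 by omega, show n - 1 = n - 2 + 1 by omega]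
          ring
      _ ≤ #(range (s / 2 + 1)) * (c * ((s : ℝ) / 2) ^ (n - 2)) := by
          gcongr
          rw [card_range, div_le_iff₀ two_pos]
          exact_mod_cast (by omega : s ≤ (s / 2 + 1) * 2)
      _ ≤ ∑ k ∈ range (s / 2 + 1), (#(latticeSphere n (lam - k ^ 2)) : ℝ) := by
          rw [← nsmul_eq_mul]
          exact card_nsmul_le_sum _ _ _ hsphere
      _ ≤ #(latticeSphere (n + 1) lam) := by
          refine mod_cast sum_card_latticeSphere_le fun k hk ↦ ?_
          have : k ≤ s := by
            have := mem_range.1 hk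
            omega
          exact (Nat.pow_le_pow_left this 2).trans (Nat.sqrt_le' lam)

end LatticePoints

section MaximalFunctions

lemma coe_latticeSphere (n lam : ℕ) :
    (latticeSphere n lam : Set (Fin n → ℤ)) = {x | ∑ i, x i ^ 2 = (lam : ℤ)} :=
  Set.ext fun _ ↦ mem_latticeSphere

lemma sphereCount_eq_card (n lam : ℕ) : sphereCount n lam = #(latticeSphere n lam) := by
  rw [sphereCount, ← coe_latticeSphere, Set.ncard_coe_finset]

lemma mulAvg_eq_sum (n lam : ℕ) (f : Fin n → ℤ → ℂ) (y : ℤ) :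
    mulAvg n lam f y =
      (#(latticeSphere n lam) : ℂ)⁻¹ * ∑ x ∈ latticeSphere n lam, ∏ i, f i (y - x i) := by
  rw [mulAvg, sphereCount_eq_card, ← coe_latticeSphere, finsum_mem_coe_finset]

lemma exists_norm_mulAvg_le {n : ℕ} (hn : 5 ≤ n) :
    ∃ C : ℝ≥0, ∀ (f : Fin n → ℤ → ℂ) (y : ℤ) (lam : ℕ), 1 ≤ lam →
      ‖mulAvg n lam f y‖ ≤ C * ∏ i, √((lam.sqrt : ℝ)⁻¹ *
        ∑ x ∈ Icc (-(lam.sqrt : ℤ)) lam.sqrt, ‖f i (y - x)‖ ^ 2) := by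
  obtain ⟨C, hC, hsum⟩ := exists_norm_sum_latticeSphere_prod_le hn
  obtain ⟨c, hc, hcard⟩ := exists_mul_sqrt_pow_le_card_latticeSphere hn
  refine ⟨⟨C / c, by positivity⟩, fun f y lam hlam ↦ ?_⟩
  replace hsum := hsum lam (fun i x ↦ f i (y - x)) hlam
  replace hcard := hcard lam hlam
  set N := lam.sqrt
  have hN : (0 : ℝ) < N := mod_cast Nat.sqrt_pos.2 hlam
  have hpow : √N ^ n * √N ^ n = (N : ℝ) ^ (n - 2) * N ^ 2 := by
    rw [← mul_pow, Real.mul_self_sqrt hN.le, ← pow_add, Nat.sub_add_cancel (by omega)]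
  simp_rw [Real.sqrt_mul (inv_nonneg.2 hN.le), prod_mul_distrib, prod_const, card_univ,
    Fintype.card_fin, Real.sqrt_inv, inv_pow]
  rw [mulAvg_eq_sum, norm_mul, norm_inv, Complex.norm_natCast]
  set P := ∏ i, √(∑ x ∈ Icc (-(N : ℤ)) N, ‖f i (y - x)‖ ^ 2)
  calc (#(latticeSphere n lam) : ℝ)⁻¹ * ‖∑ x ∈ latticeSphere n lam, ∏ i, f i (y - x i)‖
      ≤ (c * (N : ℝ) ^ (n - 2))⁻¹ * (C * (√N ^ n / N ^ 2) * P) := by gcongr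
    _ = C / c * ((√N ^ n)⁻¹ * P) := by
      field_simp
      rw [sq (√N ^ n), hpow]

/-- The quadratic maximal function of `g`, a Hardy–Littlewood maximal function of `|g|²`. As in
the main theorem, an average over the `2N + 1` points of `[-N, N]` is normalised by `N`. -/
def sqMaxFn (g : ℤ → ℂ) (y : ℤ) : ℝ≥0∞ :=
  ⨆ (N : ℕ) (_ : 1 ≤ N), (N : ℝ≥0∞)⁻¹ * ∑ x ∈ Icc (-(N : ℤ)) N, (‖g (y - x)‖₊ : ℝ≥0∞) ^ 2

lemma ofReal_sqrt_average_le_sqMaxFn (g : ℤ → ℂ) (y : ℤ) {N : ℕ} (hN : 1 ≤ N) :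
    ENNReal.ofReal √((N : ℝ)⁻¹ * ∑ x ∈ Icc (-(N : ℤ)) N, ‖g (y - x)‖ ^ 2)
      ≤ sqMaxFn g y ^ (1 / 2 : ℝ) := by
  have haverage : ENNReal.ofReal ((N : ℝ)⁻¹ * ∑ x ∈ Icc (-(N : ℤ)) N, ‖g (y - x)‖ ^ 2) =
      (N : ℝ≥0∞)⁻¹ * ∑ x ∈ Icc (-(N : ℤ)) N, (‖g (y - x)‖₊ : ℝ≥0∞) ^ 2 := by
    rw [ENNReal.ofReal_mul (by positivity), ENNReal.ofReal_inv_of_pos (mod_cast hN),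
      ENNReal.ofReal_natCast, ENNReal.ofReal_sum_of_nonneg fun _ _ ↦ by positivity]
    simp_rw [ENNReal.ofReal_pow (norm_nonneg _), ofReal_norm, enorm_eq_nnnorm]
  rw [Real.sqrt_eq_rpow, ← ENNReal.ofReal_rpow_of_nonneg (by positivity) (by norm_num), haverage]
  exact ENNReal.rpow_le_rpow
    (le_iSup₂ (f := fun (N : ℕ) (_ : 1 ≤ N) ↦ (N : ℝ≥0∞)⁻¹ *
      ∑ x ∈ Icc (-(N : ℤ)) N, (‖g (y - x)‖₊ : ℝ≥0∞) ^ 2) N hN) (by norm_num)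

lemma exists_maxFn_le_prod_sqMaxFn {n : ℕ} (hn : 5 ≤ n) :
    ∃ C : ℝ≥0, ∀ (f : Fin n → ℤ → ℂ) (y : ℤ),
      maxFn n f y ≤ C * ∏ i, sqMaxFn (f i) y ^ (1 / 2 : ℝ) := by
  obtain ⟨C, hC⟩ := exists_norm_mulAvg_le hn
  refine ⟨C, fun f y ↦ iSup₂_le fun lam hlam ↦ ?_⟩
  rw [← enorm_eq_nnnorm, ← ofReal_norm]
  refine (ENNReal.ofReal_le_ofReal (hC f y lam hlam)).trans ?_
  rw [ENNReal.ofReal_mul C.coe_nonneg, ENNReal.ofReal_coe_nnreal,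
    ENNReal.ofReal_prod_of_nonneg fun _ _ ↦ Real.sqrt_nonneg _]
  gcongr with i
  exact ofReal_sqrt_average_le_sqMaxFn (f i) y (Nat.sqrt_pos.2 hlam)

lemma tsum_prod_rpow_le_prod_tsum_rpow {α ι : Type*} (s : Finset ι) (h : ι → α → ℝ≥0∞)
    {p : ι → ℝ} (hp : ∑ i ∈ s, p i = 1) (hp₀ : ∀ i ∈ s, 0 ≤ p i) :
    ∑' a, ∏ i ∈ s, h i a ^ p i ≤ ∏ i ∈ s, (∑' a, h i a) ^ p i := by
  let _ : MeasurableSpace α := ⊤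
  simpa only [lintegral_count] using ENNReal.lintegral_prod_norm_pow_le (μ := Measure.count) s
    (f := h) (fun _ _ ↦ measurable_from_top.aemeasurable) hp hp₀

lemma lqNormE_rpow {q : ℝ} (hq : 0 < q) (g : ℤ → ℝ≥0∞) : lqNormE q g ^ q = ∑' y, g y ^ q := by
  rw [lqNormE, ← ENNReal.rpow_mul, one_div_mul_cancel hq.ne', ENNReal.rpow_one]

end MaximalFunctions

theorem statement16_general {n : ℕ} (hn : 5 ≤ n) {q : ℝ} (hq : 0 < q) :
    ∃ C : ℝ≥0, ∀ f : Fin n → ℤ → ℂ, lqNormE q (maxFn n f) ^ q ≤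
      C * ∏ i, (∑' y, sqMaxFn (f i) y ^ (q * n / 2)) ^ (1 / n : ℝ) := by
  obtain ⟨C, hC⟩ := exists_maxFn_le_prod_sqMaxFn hn
  have hn₀ : (n : ℝ) ≠ 0 := by positivity
  have hexponent (a : ℝ≥0∞) : (a ^ (1 / 2 : ℝ)) ^ q = (a ^ (q * n / 2)) ^ (1 / n : ℝ) := by
    rw [← ENNReal.rpow_mul, ← ENNReal.rpow_mul]
    congr 1
    field_simp
  refine ⟨C ^ q, fun f ↦ ?_⟩
  calc lqNormE q (maxFn n f) ^ q
      = ∑' y, maxFn n f y ^ q := lqNormE_rpow hq _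
    _ ≤ ∑' y, (C * ∏ i, sqMaxFn (f i) y ^ (1 / 2 : ℝ)) ^ q := by
        gcongr with y
        exact hC f y
    _ = (C ^ q : ℝ≥0) * ∑' y, ∏ i, (sqMaxFn (f i) y ^ (q * n / 2)) ^ (1 / n : ℝ) := by
        simp_rw [ENNReal.mul_rpow_of_nonneg _ _ hq.le, ENNReal.tsum_mul_left,
          ← ENNReal.prod_rpow_of_nonneg hq.le, hexponent, ENNReal.coe_rpow_of_nonneg _ hq.le]
    _ ≤ (C ^ q : ℝ≥0) * ∏ i, (∑' y, sqMaxFn (f i) y ^ (q * n / 2)) ^ (1 / n : ℝ) := by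
        gcongr
        exact tsum_prod_rpow_le_prod_tsum_rpow _ _ (by simp [hn₀]) fun _ _ ↦ by positivity

/-- for `n ≥ 5`, `1 ≤ q < ∞` and `p = n q`, there is `C = C(n,q)` with
`‖A_*[f₁,…,f_n]‖_{ℓ^q}^q ≤ C ∏_i (∑_y (sup_{N ≥ 1} N⁻¹ ∑_{|x| ≤ N} |f_i(y-x)|²)^{qn/2})^{1/n}`. -/
theorem statement16 (n : ℕ) (hn : 5 ≤ n) (q : ℝ) (hq : 1 ≤ q) :
    ∃ C : ℝ≥0, ∀ f : Fin n → ℤ → ℂ, (∀ i, lpNorm ((n : ℝ) * q) (f i) ≠ ∞) →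
      lqNormE q (maxFn n f) ^ q ≤ (C : ℝ≥0∞) *
        ∏ i, (∑' y : ℤ, (⨆ (N : ℕ) (_ : 1 ≤ N), (N : ℝ≥0∞)⁻¹ *
            ∑ x ∈ Finset.Icc (-(N : ℤ)) (N : ℤ), (‖f i (y - x)‖₊ : ℝ≥0∞) ^ 2)
          ^ (q * (n : ℝ) / 2)) ^ ((1 : ℝ) / n) := by
  obtain ⟨C, hC⟩ := statement16_general hn (zero_lt_one.trans_le hq)
  exact ⟨C, fun f _ ↦ hC f⟩
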